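/- Let n ≥ 3 and let P be a finite-volume non-compact right-angled convex hyperbolic n-polyhedron. Then the number of facets of P satisfies a_{n−1}(P) ≥ 1 + ν_{n−1}, where ν_{n−1} = sInf {a_{n−2}(Q) + v_∞(Q) : Q a finite-volume non-compact right-angled convex hyperbolic (n−1)-polyhedron}. -/

import Mathlib

open scoped BigOperators

noncomputable section

/-- The Minkowski bilinear form `⟨x,y⟩ = -x₀y₀ + x₁y₁ + ⋯ + xₙyₙ` on `ℝ^{n+1}`. -/
def mink {n : ℕ} (x y : Fin (n + 1) → ℝ) : ℝ :=
  -(x 0 * y 0) + ∑ i : Fin n, x i.succ * y i.succ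

/-- The hyperboloid model of the hyperbolic space `ℍⁿ`. -/
def Hyperboloid (n : ℕ) : Set (Fin (n + 1) → ℝ) :=
  {x | mink x x = -1 ∧ 0 < x 0}

/-- The Klein projection `x ↦ (x₁/x₀, …, xₙ/x₀)` of the hyperboloid onto the unit ball. -/
def kleinMap {n : ℕ} (x : Fin (n + 1) → ℝ) : EuclideanSpace ℝ (Fin n) :=
  WithLp.toLp 2 fun i => x i.succ / x 0

/-- Dimension of a subset of a real vector space: the rank of its vector span. -/
def sdim {n : ℕ} (s : Set (EuclideanSpace ℝ (Fin n))) : ℕ :=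
  Module.finrank ℝ (vectorSpan ℝ s)

/-- A convex hyperbolic `n`-polyhedron: a finite intersection of hyperbolic half-spaces
`H_{eᵢ}⁻ = {x : ⟨eᵢ,x⟩ ≤ 0}` (with `⟨eᵢ,eᵢ⟩ = 1`) having nonempty interior
(equivalently, its Klein-model image has nonempty interior in `ℝⁿ`). -/
structure HypPolyhedron (n : ℕ) where
  m : ℕ
  e : Fin m → (Fin (n + 1) → ℝ)
  unit : ∀ i, mink (e i) (e i) = 1
  nonempty_int :
    (interior (kleinMap '' {x ∈ Hyperboloid n | ∀ i, mink (e i) x ≤ 0})).Nonempty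

namespace HypPolyhedron

variable {n : ℕ} (P : HypPolyhedron n)

/-- The set of points of the polyhedron in the hyperboloid model. -/
def carrier : Set (Fin (n + 1) → ℝ) :=
  {x ∈ Hyperboloid n | ∀ i, mink (P.e i) x ≤ 0}

/-- `P̄`: the closure of the Klein-model image of the polyhedron in the closed unit ball. -/
def cl : Set (EuclideanSpace ℝ (Fin n)) :=
  closure (kleinMap '' P.carrier)

/-- The `k`-faces of `P`: the `k`-dimensional (nonempty) exposed faces of `P̄`. -/
def faces (k : ℕ) : Set (Set (EuclideanSpace ℝ (Fin n))) :=
  {F | IsExposed ℝ P.cl F ∧ F.Nonempty ∧ sdim F = k}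

/-- `a_k(P)`: the number of `k`-faces of `P`. -/
def a (k : ℕ) : ℕ := (P.faces k).ncard

/-- Vertices of `P`: the points of `0`-dimensional exposed faces of `P̄`. -/
def verts : Set (EuclideanSpace ℝ (Fin n)) :=
  {v | IsExposed ℝ P.cl {v}}

/-- Ideal vertices: vertices lying on the unit sphere. -/
def idealVerts : Set (EuclideanSpace ℝ (Fin n)) :=
  {v ∈ P.verts | ‖v‖ = 1}

/-- Finite vertices: vertices lying in the open unit ball. -/
def finiteVerts : Set (EuclideanSpace ℝ (Fin n)) :=
  {v ∈ P.verts | ‖v‖ < 1}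

/-- `v_∞(P)`: the number of ideal vertices of `P`. -/
def vInf : ℕ := P.idealVerts.ncard

/-- The bounding hyperplane `H_e` contains the face `F`. -/
def faceInHyperplane (e : Fin (n + 1) → ℝ) (F : Set (EuclideanSpace ℝ (Fin n))) : Prop :=
  ∀ x ∈ P.carrier, kleinMap x ∈ F → mink e x = 0

/-- `P` is right-angled: whenever two distinct bounding hyperplanes both contain an
`(n-2)`-dimensional face of `P`, the corresponding unit normals are orthogonal,
i.e. the dihedral angle is `π/2`. -/
def IsRightAngled : Prop :=
  ∀ i j : Fin P.m, i ≠ j →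
    (∃ F ∈ P.faces (n - 2), P.faceInHyperplane (P.e i) F ∧ P.faceInHyperplane (P.e j) F) →
    mink (P.e i) (P.e j) = 0

/-- `P` has finite volume: `P̄` is the convex hull of its (finitely many) vertices. -/
def FiniteVolume : Prop :=
  P.verts.Finite ∧ P.cl = convexHull ℝ P.verts

/-- `P` is compact: finite volume and all vertices are finite. -/
def IsCompactPoly : Prop :=
  P.FiniteVolume ∧ ∀ v ∈ P.verts, ‖v‖ < 1

/-- `P` is ideal: finite volume and all vertices are ideal. -/
def IsIdeal : Prop :=
  P.FiniteVolume ∧ ∀ v ∈ P.verts, ‖v‖ = 1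

end HypPolyhedron

/-- `ν(P) = a_{n-1}(P) + v_∞(P)` ranging over the family `𝒫ⁿ` of finite-volume non-compact
right-angled convex hyperbolic `n`-polyhedra. -/
def nuSet (n : ℕ) : Set ℕ :=
  {m | ∃ P : HypPolyhedron n,
        P.FiniteVolume ∧ P.IsRightAngled ∧ ¬ P.IsCompactPoly ∧ P.a (n - 1) + P.vInf = m}

/-- `νₙ = sInf {ν(P) : P ∈ 𝒫ⁿ}` (with `sInf ∅ = 0`). -/
def nu (n : ℕ) : ℕ := sInf (nuSet n)

/-! ### The Minkowski form -/

section Minkowski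

variable {n : ℕ}

/-- The spatial part `(x₁, …, xₙ)` of a vector of `ℝ^{n+1}`. -/
def spat : (Fin (n + 1) → ℝ) →ₗ[ℝ] EuclideanSpace ℝ (Fin n) where
  toFun x := WithLp.toLp 2 fun i => x i.succ
  map_add' _ _ := rfl
  map_smul' _ _ := rfl

/-- The point `(1, p)` of `ℝ^{n+1}` whose Klein projection is `p`. -/
def kleinLift (p : EuclideanSpace ℝ (Fin n)) : Fin (n + 1) → ℝ :=
  Fin.cons 1 p.ofLp

/-- The cone of future timelike vectors. -/
def timelike (n : ℕ) : Set (Fin (n + 1) → ℝ) := {x | ‖spat x‖ < x 0}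

/-- The closed cone of future causal vectors. -/
def causal (n : ℕ) : Set (Fin (n + 1) → ℝ) := {x | ‖spat x‖ ≤ x 0}

@[simp]
theorem spat_apply (x : Fin (n + 1) → ℝ) (i : Fin n) : spat x i = x i.succ := rfl

theorem mink_eq (x y : Fin (n + 1) → ℝ) :
    mink x y = -(x 0 * y 0) + inner ℝ (spat x) (spat y) := by
  simp [mink, PiLp.inner_apply, mul_comm]

theorem mink_self (x : Fin (n + 1) → ℝ) : mink x x = ‖spat x‖ ^ 2 - x 0 ^ 2 := by
  rw [mink_eq, real_inner_self_eq_norm_sq]; ring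

theorem mink_comm (x y : Fin (n + 1) → ℝ) : mink x y = mink y x := by
  rw [mink_eq, mink_eq, real_inner_comm]; ring

theorem mink_add_right (x y z : Fin (n + 1) → ℝ) : mink x (y + z) = mink x y + mink x z := by
  simp only [mink_eq, map_add, inner_add_right, Pi.add_apply]; ring

theorem mink_smul_right (c : ℝ) (x y : Fin (n + 1) → ℝ) : mink x (c • y) = c * mink x y := by
  simp only [mink_eq, map_smul, real_inner_smul_right, Pi.smul_apply, smul_eq_mul]; ring

theorem mink_add_left (x y z : Fin (n + 1) → ℝ) : mink (x + y) z = mink x z + mink y z := by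
  rw [mink_comm, mink_add_right, mink_comm z x, mink_comm z y]

theorem mink_smul_left (c : ℝ) (x y : Fin (n + 1) → ℝ) : mink (c • x) y = c * mink x y := by
  rw [mink_comm, mink_smul_right, mink_comm y x]

theorem mink_neg_right (x y : Fin (n + 1) → ℝ) : mink x (-y) = -mink x y := by
  rw [← neg_one_smul ℝ y, mink_smul_right]; ring

theorem mink_sub_right (x y z : Fin (n + 1) → ℝ) : mink x (y - z) = mink x y - mink x z := by
  rw [sub_eq_add_neg, mink_add_right, mink_neg_right]; ring

theorem mink_sub_left (x y z : Fin (n + 1) → ℝ) : mink (x - y) z = mink x z - mink y z := by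
  rw [mink_comm, mink_sub_right, mink_comm z x, mink_comm z y]

theorem mink_zero_right (x : Fin (n + 1) → ℝ) : mink x 0 = 0 := by
  simp [mink]

/-- The linear functional `mink e`. -/
def minkLin (e : Fin (n + 1) → ℝ) : (Fin (n + 1) → ℝ) →ₗ[ℝ] ℝ where
  toFun := mink e
  map_add' := mink_add_right e
  map_smul' c x := by simp [mink_smul_right]

@[simp]
theorem minkLin_apply (e x : Fin (n + 1) → ℝ) : minkLin e x = mink e x := rfl

theorem mink_sum_right {ι : Type*} (s : Finset ι) (e : Fin (n + 1) → ℝ)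
    (g : ι → Fin (n + 1) → ℝ) : mink e (∑ i ∈ s, g i) = ∑ i ∈ s, mink e (g i) :=
  map_sum (minkLin e) g s

theorem continuous_mink_right (e : Fin (n + 1) → ℝ) : Continuous (mink e) := by
  unfold mink; fun_prop

@[simp]
theorem kleinLift_zero (p : EuclideanSpace ℝ (Fin n)) : kleinLift p 0 = 1 := rfl

@[simp]
theorem spat_kleinLift (p : EuclideanSpace ℝ (Fin n)) : spat (kleinLift p) = p := rfl

theorem mink_kleinLift (e : Fin (n + 1) → ℝ) (p : EuclideanSpace ℝ (Fin n)) :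
    mink e (kleinLift p) = -e 0 + inner ℝ (spat e) p := by
  simp [mink_eq]

theorem continuous_mink_kleinLift (e : Fin (n + 1) → ℝ) :
    Continuous fun p => mink e (kleinLift p) := by
  simp only [mink_kleinLift]; fun_prop

theorem ext_time_spat {x y : Fin (n + 1) → ℝ} (h : x 0 = y 0) (hs : spat x = spat y) : x = y := by
  funext i
  refine Fin.cases h (fun j => ?_) i
  exact congrArg (fun v : EuclideanSpace ℝ (Fin n) => v j) hs

theorem kleinMap_eq (x : Fin (n + 1) → ℝ) : kleinMap x = (x 0)⁻¹ • spat x := by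
  ext i; simp [kleinMap, div_eq_inv_mul]

@[simp]
theorem kleinMap_kleinLift (p : EuclideanSpace ℝ (Fin n)) : kleinMap (kleinLift p) = p := by
  simp [kleinMap_eq]

theorem kleinMap_smul {c : ℝ} (hc : c ≠ 0) (x : Fin (n + 1) → ℝ) :
    kleinMap (c • x) = kleinMap x := by
  ext i; simp [kleinMap, mul_div_mul_left _ _ hc]

theorem smul_kleinLift_kleinMap {x : Fin (n + 1) → ℝ} (hx : x 0 ≠ 0) :
    x 0 • kleinLift (kleinMap x) = x := by
  apply ext_time_spat
  · simp
  · simp [kleinMap_eq, hx]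

theorem mink_kleinLift_kleinMap (e : Fin (n + 1) → ℝ) {x : Fin (n + 1) → ℝ} (hx : x 0 ≠ 0) :
    x 0 * mink e (kleinLift (kleinMap x)) = mink e x := by
  rw [← mink_smul_right, smul_kleinLift_kleinMap hx]

theorem kleinLift_combo {a b : ℝ} (hab : a + b = 1) (p q : EuclideanSpace ℝ (Fin n)) :
    kleinLift (a • p + b • q) = a • kleinLift p + b • kleinLift q := by
  apply ext_time_spat <;> simp [hab]

theorem timelike_subset_causal {x : Fin (n + 1) → ℝ} (hx : x ∈ timelike n) : x ∈ causal n :=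
  show ‖spat x‖ ≤ x 0 from le_of_lt hx

theorem pos_of_mem_timelike {x : Fin (n + 1) → ℝ} (hx : x ∈ timelike n) : 0 < x 0 :=
  (norm_nonneg _).trans_lt hx

theorem pos_of_mem_causal {x : Fin (n + 1) → ℝ} (hx : x ∈ causal n) (h0 : x ≠ 0) : 0 < x 0 := by
  have h : ‖spat x‖ ≤ x 0 := hx
  refine ((norm_nonneg _).trans h).lt_of_ne fun h' => h0 (ext_time_spat h'.symm ?_)
  rw [← h', norm_le_zero_iff] at h
  simpa using h

theorem mink_self_neg {x : Fin (n + 1) → ℝ} (hx : x ∈ timelike n) : mink x x < 0 := by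
  have h : ‖spat x‖ < x 0 := hx
  rw [mink_self]
  nlinarith [norm_nonneg (spat x)]

theorem mink_self_nonpos {x : Fin (n + 1) → ℝ} (hx : x ∈ causal n) : mink x x ≤ 0 := by
  have h : ‖spat x‖ ≤ x 0 := hx
  rw [mink_self]
  nlinarith [norm_nonneg (spat x)]

theorem mink_neg_of_timelike_of_causal {x y : Fin (n + 1) → ℝ} (hx : x ∈ timelike n)
    (hy : y ∈ causal n) (h0 : y ≠ 0) : mink x y < 0 := by
  have hy0 := pos_of_mem_causal hy h0
  have h1 : ‖spat x‖ < x 0 := hx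
  have h2 : ‖spat y‖ ≤ y 0 := hy
  rw [mink_eq]
  nlinarith [real_inner_le_norm (spat x) (spat y), norm_nonneg (spat x), norm_nonneg (spat y)]

theorem mem_causal_iff {t x : Fin (n + 1) → ℝ} (ht : t ∈ timelike n) :
    x ∈ causal n ↔ mink x x ≤ 0 ∧ mink t x ≤ 0 := by
  constructor
  · intro hx
    refine ⟨mink_self_nonpos hx, ?_⟩
    by_cases h0 : x = 0
    · simp [h0, mink_zero_right]
    · exact (mink_neg_of_timelike_of_causal ht hx h0).le
  · rintro ⟨h1, h2⟩
    rw [mink_self] at h1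
    have habs : ‖spat x‖ ≤ |x 0| := abs_norm (spat x) ▸ sq_le_sq.1 (by linarith)
    rcases le_or_gt 0 (x 0) with h | h
    · rwa [abs_of_nonneg h] at habs
    · exfalso
      rw [abs_of_neg h] at habs
      have ht' : ‖spat t‖ < t 0 := ht
      rw [mink_eq] at h2
      have := neg_le_of_abs_le (abs_real_inner_le_norm (spat t) (spat x))
      nlinarith [norm_nonneg (spat t), norm_nonneg (spat x)]

theorem mem_timelike_of_causal {x : Fin (n + 1) → ℝ} (hx : x ∈ causal n) (h : mink x x < 0) :
    x ∈ timelike n := by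
  have h1 : ‖spat x‖ ≤ x 0 := hx
  rw [mink_self] at h
  refine lt_of_le_of_ne h1 fun h2 => ?_
  rw [h2] at h; simp at h

theorem mem_timelike_iff {t x : Fin (n + 1) → ℝ} (ht : t ∈ timelike n) :
    x ∈ timelike n ↔ mink x x < 0 ∧ mink t x ≤ 0 := by
  constructor
  · intro hx
    exact ⟨mink_self_neg hx, ((mem_causal_iff ht).1 (timelike_subset_causal hx)).2⟩
  · rintro ⟨h1, h2⟩
    exact mem_timelike_of_causal ((mem_causal_iff ht).2 ⟨h1.le, h2⟩) h1

theorem mink_self_nonneg_of_orthogonal {t x : Fin (n + 1) → ℝ} (ht : t ∈ timelike n)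
    (h : mink t x = 0) : 0 ≤ mink x x ∧ (mink x x = 0 → x = 0) := by
  by_contra hc
  have hx : mink x x ≤ 0 := by
    by_contra h'
    exact hc ⟨by linarith, fun h'' => by linarith⟩
  have hx0 : x ≠ 0 := fun h' => hc ⟨by simp [h', mink_zero_right], fun _ => h'⟩
  have := mink_neg_of_timelike_of_causal ht ((mem_causal_iff ht).2 ⟨hx, h.le⟩) hx0
  linarith

theorem convex_causal : Convex ℝ (causal n) := by
  intro x hx y hy a b ha hb _
  have h1 : ‖spat x‖ ≤ x 0 := hx
  have h2 : ‖spat y‖ ≤ y 0 := hy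
  show ‖spat (a • x + b • y)‖ ≤ a * x 0 + b * y 0
  rw [map_add, map_smul, map_smul]
  refine (norm_add_le _ _).trans ?_
  rw [norm_smul, norm_smul, Real.norm_of_nonneg ha, Real.norm_of_nonneg hb]
  gcongr

theorem smul_mem_timelike {c : ℝ} (hc : 0 < c) {x : Fin (n + 1) → ℝ} (hx : x ∈ timelike n) :
    c • x ∈ timelike n := by
  have h1 : ‖spat x‖ < x 0 := hx
  show ‖spat (c • x)‖ < c * x 0
  rw [map_smul, norm_smul, Real.norm_of_nonneg hc.le]
  gcongr

theorem smul_mem_causal {c : ℝ} (hc : 0 ≤ c) {x : Fin (n + 1) → ℝ} (hx : x ∈ causal n) :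
    c • x ∈ causal n := by
  have h1 : ‖spat x‖ ≤ x 0 := hx
  show ‖spat (c • x)‖ ≤ c * x 0
  rw [map_smul, norm_smul, Real.norm_of_nonneg hc]
  gcongr

theorem add_mem_timelike {x y : Fin (n + 1) → ℝ} (hx : x ∈ timelike n) (hy : y ∈ causal n) :
    x + y ∈ timelike n := by
  have h1 : ‖spat x‖ < x 0 := hx
  have h2 : ‖spat y‖ ≤ y 0 := hy
  show ‖spat (x + y)‖ < x 0 + y 0
  rw [map_add]
  exact (norm_add_le _ _).trans_lt (by linarith)

theorem convex_timelike : Convex ℝ (timelike n) := by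
  intro x hx y hy a b ha hb hab
  rcases ha.eq_or_lt with rfl | ha
  · simp at hab; subst hab; simpa using hy
  · exact add_mem_timelike (smul_mem_timelike ha hx)
      (smul_mem_causal hb (timelike_subset_causal hy))

theorem kleinLift_mem_timelike {p : EuclideanSpace ℝ (Fin n)} :
    kleinLift p ∈ timelike n ↔ ‖p‖ < 1 := by
  simp [timelike]

theorem kleinLift_mem_causal {p : EuclideanSpace ℝ (Fin n)} :
    kleinLift p ∈ causal n ↔ ‖p‖ ≤ 1 := by
  simp [causal]

theorem norm_kleinMap_lt_one {x : Fin (n + 1) → ℝ} (hx : x ∈ timelike n) : ‖kleinMap x‖ < 1 := by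
  have h0 := pos_of_mem_timelike hx
  have h1 : ‖spat x‖ < x 0 := hx
  rw [kleinMap_eq, norm_smul, norm_inv, Real.norm_of_nonneg h0.le, inv_mul_lt_iff₀ h0]
  simpa using h1

theorem norm_kleinMap_le_one {x : Fin (n + 1) → ℝ} (hx : x ∈ causal n) (h0 : 0 < x 0) :
    ‖kleinMap x‖ ≤ 1 := by
  have h1 : ‖spat x‖ ≤ x 0 := hx
  rw [kleinMap_eq, norm_smul, norm_inv, Real.norm_of_nonneg h0.le, inv_mul_le_iff₀ h0]
  simpa using h1

theorem kleinLift_ne_zero (p : EuclideanSpace ℝ (Fin n)) : kleinLift p ≠ 0 := fun h => by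
  have := congrFun h 0
  simp at this

/-- Distinct points of the closed ball, one of which is on the sphere. -/
theorem mink_kleinLift_neg {p q : EuclideanSpace ℝ (Fin n)} (hp : ‖p‖ ≤ 1) (hq : ‖q‖ ≤ 1)
    (hpq : p ≠ q) : mink (kleinLift p) (kleinLift q) < 0 := by
  have h : inner ℝ p q < 1 := by
    have h1 : 0 < ‖p - q‖ ^ 2 := by
      have := norm_pos_iff.2 (sub_ne_zero.2 hpq); positivity
    rw [norm_sub_sq_real] at h1
    nlinarith [norm_nonneg p, norm_nonneg q]
  rw [mink_kleinLift]
  simpa using h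

theorem mem_hyperboloid_iff {x : Fin (n + 1) → ℝ} :
    x ∈ Hyperboloid n ↔ x ∈ timelike n ∧ mink x x = -1 := by
  constructor
  · rintro ⟨h1, h2⟩
    refine ⟨?_, h1⟩
    rw [mink_self] at h1
    show ‖spat x‖ < x 0
    exact lt_of_pow_lt_pow_left₀ 2 h2.le (by linarith)
  · rintro ⟨h1, h2⟩
    exact ⟨h2, pos_of_mem_timelike h1⟩

theorem exists_smul_mem_hyperboloid {x : Fin (n + 1) → ℝ} (hx : x ∈ timelike n) :
    ∃ c : ℝ, 0 < c ∧ c • x ∈ Hyperboloid n := by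
  have h := mink_self_neg hx
  have hs : 0 < Real.sqrt (-mink x x) := Real.sqrt_pos.2 (by linarith)
  refine ⟨(Real.sqrt (-mink x x))⁻¹, inv_pos.2 hs, mem_hyperboloid_iff.2
    ⟨smul_mem_timelike (inv_pos.2 hs) hx, ?_⟩⟩
  rw [mink_smul_left, mink_smul_right, ← mul_assoc, ← mul_inv, Real.mul_self_sqrt (by linarith)]
  rw [inv_neg, neg_mul, inv_mul_cancel₀ h.ne]

end Minkowski
/-! ### The Klein image of a polyhedron -/

theorem kleinMap_image_eq {n : ℕ} {ι : Type*} (e : ι → Fin (n + 1) → ℝ) :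
    kleinMap '' {x ∈ Hyperboloid n | ∀ i, mink (e i) x ≤ 0} =
      {p | ‖p‖ < 1 ∧ ∀ i, mink (e i) (kleinLift p) ≤ 0} := by
  ext p
  constructor
  · rintro ⟨x, ⟨hx, hxe⟩, rfl⟩
    have ht := (mem_hyperboloid_iff.1 hx).1
    have h0 := pos_of_mem_timelike ht
    refine ⟨norm_kleinMap_lt_one ht, fun i => ?_⟩
    have := hxe i
    rw [← mink_kleinLift_kleinMap _ h0.ne'] at this
    exact nonpos_of_mul_nonpos_right this h0
  · rintro ⟨hp, hpe⟩
    obtain ⟨c, hc, hcx⟩ := exists_smul_mem_hyperboloid (kleinLift_mem_timelike.2 hp)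
    refine ⟨_, ⟨hcx, fun i => ?_⟩, (kleinMap_smul hc.ne' _).trans (kleinMap_kleinLift p)⟩
    rw [mink_smul_right]
    exact mul_nonpos_of_nonneg_of_nonpos hc.le (hpe i)

theorem isOpen_kleinLift_timelike_neg {n : ℕ} {ι : Type*} (s : Finset ι)
    (e : ι → Fin (n + 1) → ℝ) :
    IsOpen {p : EuclideanSpace ℝ (Fin n) | ‖p‖ < 1 ∧ ∀ i ∈ s, mink (e i) (kleinLift p) < 0} := by
  have : {p : EuclideanSpace ℝ (Fin n) | ‖p‖ < 1 ∧ ∀ i ∈ s, mink (e i) (kleinLift p) < 0} =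
      {p | ‖p‖ < 1} ∩ ⋂ i ∈ s, {p | mink (e i) (kleinLift p) < 0} := by
    ext; simp
  rw [this]
  exact (isOpen_lt continuous_norm continuous_const).inter
    (isOpen_biInter_finset fun i _ => isOpen_lt (continuous_mink_kleinLift _) continuous_const)

theorem nonempty_interior_kleinMap_image {n : ℕ} {ι : Type*} [Fintype ι]
    (e : ι → Fin (n + 1) → ℝ) {x : Fin (n + 1) → ℝ} (hx : x ∈ timelike n)
    (hxe : ∀ i, mink (e i) x < 0) :
    (interior (kleinMap '' {x ∈ Hyperboloid n | ∀ i, mink (e i) x ≤ 0})).Nonempty := by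
  rw [kleinMap_image_eq]
  refine ⟨kleinMap x, interior_maximal ?_ (isOpen_kleinLift_timelike_neg Finset.univ e) ?_⟩
  · rintro p ⟨h1, h2⟩
    exact ⟨h1, fun i => (h2 i (Finset.mem_univ i)).le⟩
  · have h0 := pos_of_mem_timelike hx
    refine ⟨norm_kleinMap_lt_one hx, fun i _ => ?_⟩
    have := hxe i
    rw [← mink_kleinLift_kleinMap _ h0.ne'] at this
    exact neg_of_mul_neg_right this h0.le

theorem spat_ne_zero_of_mink_self {n : ℕ} {e : Fin (n + 1) → ℝ} (he : mink e e = 1) :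
    spat e ≠ 0 := by
  intro h
  rw [mink_self, h] at he
  simp at he
  nlinarith [sq_nonneg (e 0)]

namespace HypPolyhedron

variable {n : ℕ} (P : HypPolyhedron n)

theorem exists_timelike_neg : ∃ x ∈ timelike n, ∀ i, mink (P.e i) x < 0 := by
  obtain ⟨p, hp⟩ := P.nonempty_int
  rw [kleinMap_image_eq] at hp
  have hp' := interior_subset hp
  refine ⟨kleinLift p, kleinLift_mem_timelike.2 hp'.1, fun i => (hp'.2 i).lt_of_ne fun h0 => ?_⟩
  have hlim : Filter.Tendsto (fun t : ℝ => p + t • spat (P.e i)) (nhdsWithin 0 (Set.Ioi 0))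
      (nhds p) := by
    have : Continuous fun t : ℝ => p + t • spat (P.e i) := by fun_prop
    simpa using (this.tendsto 0).mono_left nhdsWithin_le_nhds
  obtain ⟨t, ht, ht0⟩ := ((hlim.eventually (mem_interior_iff_mem_nhds.1 hp)).and
    self_mem_nhdsWithin).exists
  have h1 := ht.2 i
  rw [mink_kleinLift] at h0 h1
  rw [inner_add_right, real_inner_smul_right, real_inner_self_eq_norm_sq] at h1
  have h2 := norm_pos_iff.2 (spat_ne_zero_of_mink_self (P.unit i))
  have : 0 < t * ‖spat (P.e i)‖ ^ 2 := mul_pos ht0 (by positivity)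
  linarith

theorem image_carrier : kleinMap '' P.carrier =
    {p | ‖p‖ < 1 ∧ ∀ i, mink (P.e i) (kleinLift p) ≤ 0} :=
  kleinMap_image_eq P.e

theorem mem_cl_iff {p : EuclideanSpace ℝ (Fin n)} :
    p ∈ P.cl ↔ ‖p‖ ≤ 1 ∧ ∀ i, mink (P.e i) (kleinLift p) ≤ 0 := by
  rw [cl, image_carrier]
  constructor
  · intro hp
    have hcl : IsClosed {p : EuclideanSpace ℝ (Fin n) |
        ‖p‖ ≤ 1 ∧ ∀ i, mink (P.e i) (kleinLift p) ≤ 0} := by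
      simp only [Set.ofPred_and, Set.ofPred_forall]
      exact (isClosed_le continuous_norm continuous_const).inter
        (isClosed_iInter fun i => isClosed_le (continuous_mink_kleinLift _) continuous_const)
    refine closure_minimal (fun q hq => ?_) hcl hp
    exact ⟨le_of_lt hq.1, hq.2⟩
  · rintro ⟨hp, hpe⟩
    obtain ⟨x, hx, hxe⟩ := P.exists_timelike_neg
    have h0 := pos_of_mem_timelike hx
    set q := kleinMap x
    have hq : ‖q‖ < 1 := norm_kleinMap_lt_one hx
    have hlim : Filter.Tendsto (fun t : ℝ => (1 - t) • p + t • q) (nhdsWithin 0 (Set.Ioo 0 1))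
        (nhds p) := by
      have : Continuous fun t : ℝ => (1 - t) • p + t • q := by fun_prop
      simpa using (this.tendsto 0).mono_left nhdsWithin_le_nhds
    have hne : (nhdsWithin (0 : ℝ) (Set.Ioo 0 1)).NeBot := by
      rw [← mem_closure_iff_nhdsWithin_neBot, closure_Ioo zero_ne_one]
      simp
    refine mem_closure_of_tendsto hlim ?_
    filter_upwards [self_mem_nhdsWithin] with t ht
    have ht1 : 0 < 1 - t := sub_pos.2 ht.2
    constructor
    · refine (norm_add_le _ _).trans_lt ?_
      rw [norm_smul, norm_smul, Real.norm_of_nonneg ht1.le, Real.norm_of_nonneg ht.1.le]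
      nlinarith [ht.1]
    · intro i
      rw [kleinLift_combo (by ring), mink_add_right, mink_smul_right, mink_smul_right]
      have h1 : mink (P.e i) (kleinLift q) ≤ 0 := by
        have := hxe i
        rw [← mink_kleinLift_kleinMap _ h0.ne'] at this
        exact (neg_of_mul_neg_right this h0.le).le
      nlinarith [hpe i, ht.1]

theorem kleinMap_mem_cl {x : Fin (n + 1) → ℝ} (hx : x ∈ causal n) (h0 : 0 < x 0)
    (hxe : ∀ i, mink (P.e i) x ≤ 0) : kleinMap x ∈ P.cl := by
  refine P.mem_cl_iff.2 ⟨norm_kleinMap_le_one hx h0, fun i => ?_⟩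
  have := hxe i
  rw [← mink_kleinLift_kleinMap _ h0.ne'] at this
  exact nonpos_of_mul_nonpos_right this h0

theorem convex_cl : Convex ℝ P.cl := by
  intro p hp q hq a b ha hb hab
  rw [mem_cl_iff] at *
  constructor
  · rw [← kleinLift_mem_causal] at *
    rw [kleinLift_combo hab]
    exact convex_causal hp.1 hq.1 ha hb hab
  · intro i
    rw [kleinLift_combo hab, mink_add_right, mink_smul_right, mink_smul_right]
    nlinarith [hp.2 i, hq.2 i]

theorem verts_subset_cl : P.verts ⊆ P.cl := fun _ hv =>
  hv.isExtreme.subset rfl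

theorem mem_verts_of_norm_eq_one {p : EuclideanSpace ℝ (Fin n)} (hp : p ∈ P.cl)
    (h1 : ‖p‖ = 1) : p ∈ P.verts := by
  intro _
  refine ⟨innerSL ℝ p, ?_⟩
  have key : ∀ y ∈ P.cl, inner ℝ p y ≤ (1 : ℝ) := fun y hy => by
    have := real_inner_le_norm p y
    rw [h1, one_mul] at this
    exact this.trans (P.mem_cl_iff.1 hy).1
  ext q
  simp only [Set.mem_singleton_iff, Set.mem_ofPred_eq, innerSL_apply_apply]
  constructor
  · rintro rfl
    refine ⟨hp, fun y hy => ?_⟩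
    rw [real_inner_self_eq_norm_sq, h1]
    simpa using key y hy
  · rintro ⟨hq, hmax⟩
    by_contra hne
    have h2 := mink_kleinLift_neg h1.le (P.mem_cl_iff.1 hq).1 (Ne.symm hne)
    have h3 := hmax p hp
    rw [real_inner_self_eq_norm_sq, h1] at h3
    rw [mink_kleinLift] at h2
    simp at h2
    linarith

theorem mem_idealVerts_iff {p : EuclideanSpace ℝ (Fin n)} :
    p ∈ P.idealVerts ↔ p ∈ P.cl ∧ ‖p‖ = 1 :=
  ⟨fun h => ⟨P.verts_subset_cl h.1, h.2⟩, fun h => ⟨P.mem_verts_of_norm_eq_one h.1 h.2, h.2⟩⟩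

theorem exists_mem_idealVerts (hfv : P.FiniteVolume) (hnc : ¬ P.IsCompactPoly) :
    ∃ w, w ∈ P.idealVerts := by
  by_contra! h
  refine hnc ⟨hfv, fun v hv => ?_⟩
  refine (P.mem_cl_iff.1 (P.verts_subset_cl hv)).1.lt_of_ne fun h1 => h v ⟨hv, h1⟩

/-! ### Faces of codimension one and two -/

theorem exists_forall_neg_of_convex {G : Set (EuclideanSpace ℝ (Fin n))} (hG : Convex ℝ G)
    (hGcl : G ⊆ P.cl) (hnt : G.Nontrivial) (s : Finset (Fin P.m))
    (hs : ∀ i ∈ s, ∃ g ∈ G, mink (P.e i) (kleinLift g) ≠ 0) :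
    ∃ z ∈ G, ‖z‖ < 1 ∧ ∀ i ∈ s, mink (P.e i) (kleinLift z) < 0 := by
  have hmid : ∀ p ∈ G, ∀ q ∈ G, (2⁻¹ : ℝ) • p + (2⁻¹ : ℝ) • q ∈ G := fun p hp q hq =>
    hG hp hq (by norm_num) (by norm_num) (by norm_num)
  induction s using Finset.induction_on with
  | empty =>
    obtain ⟨p, hp, q, hq, hpq⟩ := hnt
    refine ⟨_, hmid p hp q hq, ?_, by simp⟩
    have h1 := (P.mem_cl_iff.1 (hGcl hp)).1
    have h2 := (P.mem_cl_iff.1 (hGcl hq)).1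
    exact norm_combo_lt_of_ne h1 h2 hpq (by norm_num) (by norm_num) (by norm_num)
  | insert i s his ih =>
    obtain ⟨z, hz, hz1, hzs⟩ := ih fun j hj => hs j (Finset.mem_insert_of_mem hj)
    obtain ⟨g, hg, hgi⟩ := hs i (Finset.mem_insert_self i s)
    have hgc := P.mem_cl_iff.1 (hGcl hg)
    have hzc := P.mem_cl_iff.1 (hGcl hz)
    refine ⟨_, hmid z hz g hg, ?_, fun j hj => ?_⟩
    · refine (norm_add_le _ _).trans_lt ?_
      rw [norm_smul, norm_smul]
      norm_num
      linarith [hgc.1]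
    · rw [kleinLift_combo (by norm_num), mink_add_right, mink_smul_right, mink_smul_right]
      rcases Finset.mem_insert.1 hj with rfl | hj
      · have := (hgc.2 j).lt_of_ne hgi
        linarith [hzc.2 j]
      · linarith [hzs j hj, hgc.2 j]

theorem nontrivial_of_sdim_pos {G : Set (EuclideanSpace ℝ (Fin n))} (h : 0 < sdim G) :
    G.Nontrivial := by
  by_contra hG
  rw [Set.not_nontrivial_iff] at hG
  rw [sdim, vectorSpan_of_subsingleton ℝ hG] at h
  simp at h

theorem sdim_cl : sdim P.cl = n := by
  have h : (interior P.cl).Nonempty :=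
    P.nonempty_int.mono (interior_mono subset_closure)
  rw [sdim, ← direction_affineSpan, affineSpan_eq_top_of_nonempty_interior
    (h.mono (interior_mono (subset_convexHull ℝ _))), AffineSubspace.direction_top, finrank_top,
    finrank_euclideanSpace_fin]

theorem inner_spat_sub {e : Fin (n + 1) → ℝ} {p q : EuclideanSpace ℝ (Fin n)} :
    inner ℝ (spat e) (p - q) = mink e (kleinLift p) - mink e (kleinLift q) := by
  rw [mink_kleinLift, mink_kleinLift, inner_sub_right]; ring

/-- Every facet is cut out by one of the bounding hyperplanes. -/
theorem exists_eq_of_mem_faces (hn : 2 ≤ n) {G : Set (EuclideanSpace ℝ (Fin n))}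
    (hG : G ∈ P.faces (n - 1)) : ∃ i, G = {p ∈ P.cl | mink (P.e i) (kleinLift p) = 0} := by
  obtain ⟨hexp, hne, hdim⟩ := hG
  have hGcl : G ⊆ P.cl := hexp.subset
  have hconv : Convex ℝ G := hexp.convex P.convex_cl
  have hnt : G.Nontrivial := nontrivial_of_sdim_pos (by omega)
  obtain ⟨l, hl⟩ := hexp hne
  have hl0 : l ≠ 0 := by
    rintro rfl
    have : G = P.cl := by rw [hl]; simp
    rw [this, P.sdim_cl] at hdim
    omega
  obtain ⟨g₀, hg₀⟩ := hne
  obtain ⟨i, hi⟩ : ∃ i, ∀ g ∈ G, mink (P.e i) (kleinLift g) = 0 := by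
    by_contra! hcon
    obtain ⟨z, hz, hz1, hzs⟩ := P.exists_forall_neg_of_convex hconv hGcl hnt Finset.univ
      fun i _ => hcon i
    have hmax : IsLocalMax l z := by
      filter_upwards [(isOpen_kleinLift_timelike_neg Finset.univ P.e).mem_nhds ⟨hz1, hzs⟩]
        with y hy
      rw [hl] at hz
      exact hz.2 y (P.mem_cl_iff.2 ⟨hy.1.le, fun i => (hy.2 i (Finset.mem_univ i)).le⟩)
    have := hmax.fderiv_eq_zero
    rw [l.fderiv] at this
    exact hl0 this
  have hspan_l : vectorSpan ℝ G ≤ LinearMap.ker (l : EuclideanSpace ℝ (Fin n) →ₗ[ℝ] ℝ) := by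
    rw [vectorSpan_def, Submodule.span_le]
    rintro _ ⟨p, hp, q, hq, rfl⟩
    rw [hl] at hp hq
    have : l p = l q := le_antisymm (hq.2 p hp.1) (hp.2 q hq.1)
    simp [this]
  have hspan_e : vectorSpan ℝ G ≤ (ℝ ∙ spat (P.e i))ᗮ := by
    rw [vectorSpan_def, Submodule.span_le]
    rintro _ ⟨p, hp, q, hq, rfl⟩
    rw [SetLike.mem_coe, Submodule.mem_orthogonal_singleton_iff_inner_right]
    beta_reduce
    rw [vsub_eq_sub, inner_spat_sub, hi p hp, hi q hq, sub_zero]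
  have hrank_e : Module.finrank ℝ (ℝ ∙ spat (P.e i))ᗮ = n - 1 := by
    have h1 := Submodule.finrank_add_finrank_orthogonal (ℝ ∙ spat (P.e i))
    rw [finrank_span_singleton (spat_ne_zero_of_mink_self (P.unit i))] at h1
    simp at h1
    omega
  have hrank_l : Module.finrank ℝ
      (LinearMap.ker (l : EuclideanSpace ℝ (Fin n) →ₗ[ℝ] ℝ)) = n - 1 := by
    have hne : (l : EuclideanSpace ℝ (Fin n) →ₗ[ℝ] ℝ) ≠ 0 := fun h =>
      hl0 (ContinuousLinearMap.coe_injective h)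
    have h1 := Module.Dual.finrank_ker_add_one_of_ne_zero hne
    simp at h1
    omega
  have h1 : vectorSpan ℝ G = LinearMap.ker (l : EuclideanSpace ℝ (Fin n) →ₗ[ℝ] ℝ) :=
    Submodule.eq_of_le_of_finrank_eq hspan_l (hdim.trans hrank_l.symm)
  have h2 : vectorSpan ℝ G = (ℝ ∙ spat (P.e i))ᗮ :=
    Submodule.eq_of_le_of_finrank_eq hspan_e (hdim.trans hrank_e.symm)
  refine ⟨i, Set.Subset.antisymm (fun g hg => ⟨hGcl hg, hi g hg⟩) ?_⟩
  rintro p ⟨hp, hpi⟩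
  have h3 : p - g₀ ∈ (ℝ ∙ spat (P.e i))ᗮ := by
    rw [Submodule.mem_orthogonal_singleton_iff_inner_right, inner_spat_sub, hpi,
      hi g₀ hg₀, sub_zero]
  rw [← h2, h1, LinearMap.mem_ker] at h3
  have h4 : l p = l g₀ := by simpa [sub_eq_zero] using h3
  rw [hl] at hg₀ ⊢
  exact ⟨hp, fun y hy => h4 ▸ hg₀.2 y hy⟩

theorem finite_faces (hn : 2 ≤ n) : (P.faces (n - 1)).Finite :=
  (Set.finite_range fun i => {p ∈ P.cl | mink (P.e i) (kleinLift p) = 0}).subset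
    fun _ hG => (P.exists_eq_of_mem_faces hn hG).imp fun _ h => h.symm

theorem a_le_m (hn : 2 ≤ n) : P.a (n - 1) ≤ P.m := by
  have hsub : P.faces (n - 1) ⊆
      (fun i => {p ∈ P.cl | mink (P.e i) (kleinLift p) = 0}) '' Set.univ :=
    fun _ hG => (P.exists_eq_of_mem_faces hn hG).imp fun _ h => ⟨trivial, h.symm⟩
  refine (Set.ncard_le_ncard hsub (Set.toFinite _)).trans ?_
  refine (Set.ncard_image_le (Set.toFinite _)).trans ?_
  simp [Set.ncard_univ]

/-- The face cut out by the hyperplanes indexed by `A`, when these hyperplanes meet near `s` only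
inside of the polyhedron. -/
theorem mem_faces_of_forall_mem {A : Finset (Fin P.m)} {s : EuclideanSpace ℝ (Fin n)}
    (hs : ∀ i ∈ A, mink (P.e i) (kleinLift s) = 0)
    (hnear : ∀ᶠ p in nhds s, (∀ i ∈ A, mink (P.e i) (kleinLift p) = 0) → p ∈ P.cl) :
    {p ∈ P.cl | ∀ i ∈ A, mink (P.e i) (kleinLift p) = 0} ∈
      P.faces (n - Module.finrank ℝ (Submodule.span ℝ ((fun i => spat (P.e i)) '' A))) := by
  set F := {p ∈ P.cl | ∀ i ∈ A, mink (P.e i) (kleinLift p) = 0} with hF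
  set U := Submodule.span ℝ ((fun i => spat (P.e i)) '' A) with hU
  have hsF : s ∈ F := ⟨hnear.self_of_nhds hs, hs⟩
  have hmemU : ∀ v, v ∈ Uᗮ ↔ ∀ i ∈ A, inner ℝ (spat (P.e i)) v = 0 := by
    intro v
    rw [hU, Submodule.mem_orthogonal]
    constructor
    · intro h i hi
      exact h _ (Submodule.subset_span ⟨i, hi, rfl⟩)
    · intro h u hu
      induction hu using Submodule.span_induction with
      | mem x hx => obtain ⟨i, hi, rfl⟩ := hx; exact h i hi
      | zero => simp
      | add x y _ _ hx hy => rw [inner_add_left, hx, hy, add_zero]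
      | smul c x _ hx => rw [real_inner_smul_left, hx, mul_zero]
  refine ⟨fun _ => ⟨∑ i ∈ A, innerSL ℝ (spat (P.e i)), ?_⟩, ⟨s, hsF⟩, ?_⟩
  · have hle : ∀ y, (∑ i ∈ A, innerSL ℝ (spat (P.e i))) y =
        ∑ i ∈ A, mink (P.e i) (kleinLift y) + ∑ i ∈ A, P.e i 0 := by
      intro y
      rw [← Finset.sum_add_distrib, sum_apply]
      refine Finset.sum_congr rfl fun i _ => ?_
      rw [mink_kleinLift, innerSL_apply_apply]; ring
    ext p
    simp only [hle, add_le_add_iff_right, Set.mem_ofPred_eq]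
    constructor
    · rintro ⟨hp, hp0⟩
      refine ⟨hp, fun y hy => Finset.sum_le_sum fun i hi => ?_⟩
      rw [hp0 i hi]
      exact (P.mem_cl_iff.1 hy).2 i
    · rintro ⟨hp, hmax⟩
      refine ⟨hp, ?_⟩
      have h1 := hmax s hsF.1
      rw [Finset.sum_eq_zero hs] at h1
      have h2 : ∀ i ∈ A, mink (P.e i) (kleinLift p) ≤ 0 := fun i _ => (P.mem_cl_iff.1 hp).2 i
      exact (Finset.sum_eq_zero_iff_of_nonpos h2).1 (le_antisymm (Finset.sum_nonpos h2) h1)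
  · have hspan : vectorSpan ℝ F = Uᗮ := by
      apply le_antisymm
      · rw [vectorSpan_def, Submodule.span_le]
        rintro _ ⟨p, hp, q, hq, rfl⟩
        rw [SetLike.mem_coe, hmemU]
        intro i hi
        beta_reduce
        rw [vsub_eq_sub, inner_spat_sub, hp.2 i hi, hq.2 i hi, sub_zero]
      · intro v hv
        rw [hmemU] at hv
        have hlim : Filter.Tendsto (fun t : ℝ => s + t • v) (nhdsWithin 0 (Set.Ioi 0))
            (nhds s) := by
          have : Continuous fun t : ℝ => s + t • v := by fun_prop
          simpa using (this.tendsto 0).mono_left nhdsWithin_le_nhds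
        obtain ⟨t, ht, ht0⟩ := ((hlim.eventually hnear).and self_mem_nhdsWithin).exists
        have h0 : ∀ i ∈ A, mink (P.e i) (kleinLift (s + t • v)) = 0 := by
          intro i hi
          have h1 := hs i hi
          rw [mink_kleinLift] at h1 ⊢
          rw [inner_add_right, real_inner_smul_right, hv i hi]
          linarith
        have h1 := vsub_mem_vectorSpan ℝ (show s + t • v ∈ F from ⟨ht h0, h0⟩) hsF
        have h2 := Submodule.smul_mem _ t⁻¹ h1
        simpa [smul_smul, inv_mul_cancel₀ (ne_of_gt ht0)] using h2
    have h1 := Submodule.finrank_add_finrank_orthogonal U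
    rw [finrank_euclideanSpace_fin] at h1
    rw [sdim, hspan]
    omega

end HypPolyhedron
/-! ### Irredundant descriptions -/

/-- A finite family of linear inequalities on a convex set, satisfied strictly at some point,
contains an irredundant equivalent subfamily. -/
theorem exists_irredundant_subfamily {E ι : Type*} [AddCommGroup E] [Module ℝ E] [DecidableEq ι]
    {D : Set E} (hD : Convex ℝ D) (f : ι → E →ₗ[ℝ] ℝ) {p : E} (hp : p ∈ D) (A : Finset ι)
    (hpA : ∀ i ∈ A, f i p < 0) :
    ∃ J ⊆ A, (∀ x ∈ D, (∀ j ∈ J, f j x ≤ 0) → ∀ i ∈ A, f i x ≤ 0) ∧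
      ∀ j ∈ J, ∃ s ∈ D, f j s = 0 ∧ ∀ k ∈ J, k ≠ j → f k s < 0 := by
  obtain ⟨J, hJA, hJ⟩ := exists_minimal_le_of_wellFoundedLT
    (fun J : Finset ι => ∀ x ∈ D, (∀ j ∈ J, f j x ≤ 0) → ∀ i ∈ A, f i x ≤ 0) A
    (fun x _ h => h)
  refine ⟨J, hJA, hJ.prop, fun j hj => ?_⟩
  have hnot := hJ.not_prop_of_lt (Finset.erase_ssubset hj)
  push Not at hnot
  obtain ⟨x, hx, hxJ, i, hi, hxi⟩ := hnot
  have hxj : 0 < f j x := by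
    by_contra! hcon
    refine absurd (hJ.prop x hx (fun k hk => ?_) i hi) (not_le.2 hxi)
    rcases eq_or_ne k j with rfl | hkj
    · exact hcon
    · exact hxJ k (Finset.mem_erase.2 ⟨hkj, hk⟩)
  have hpj := hpA j (hJA hj)
  have hden : 0 < f j x - f j p := by linarith
  have ha : 0 < f j x / (f j x - f j p) := div_pos hxj hden
  have hb : 0 < -f j p / (f j x - f j p) := div_pos (by linarith) hden
  refine ⟨(f j x / (f j x - f j p)) • p + (-f j p / (f j x - f j p)) • x,
    hD hp hx ha.le hb.le (by field_simp; ring), ?_, fun k hk hkj => ?_⟩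
  · simp only [map_add, map_smul, smul_eq_mul]
    field_simp
    ring
  · simp only [map_add, map_smul, smul_eq_mul]
    have h1 := mul_neg_of_pos_of_neg ha (hpA k (hJA hk))
    have h2 := mul_nonpos_of_nonneg_of_nonpos hb.le (hxJ k (Finset.mem_erase.2 ⟨hkj, hk⟩))
    linarith

namespace HypPolyhedron

variable {n : ℕ} (P : HypPolyhedron n)

/-- The half-spaces indexed by `J` cut out the polyhedron, and none of them can be omitted. -/
structure IsIrredundant (J : Finset (Fin P.m)) : Prop where
  nonpos : ∀ x ∈ timelike n, (∀ j ∈ J, mink (P.e j) x ≤ 0) → ∀ i, mink (P.e i) x ≤ 0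
  exists_mem : ∀ j ∈ J, ∃ s ∈ timelike n, mink (P.e j) s = 0 ∧
    ∀ k ∈ J, k ≠ j → mink (P.e k) s < 0

theorem exists_isIrredundant : ∃ J, P.IsIrredundant J := by
  obtain ⟨p, hp, hpe⟩ := P.exists_timelike_neg
  obtain ⟨J, -, h1, h2⟩ := exists_irredundant_subfamily convex_timelike
    (fun i => minkLin (P.e i)) hp Finset.univ fun i _ => hpe i
  exact ⟨J, fun x hx hxJ i => h1 x hx hxJ i (Finset.mem_univ i), h2⟩

theorem mink_kleinLift_kleinMap_eq_zero {e x : Fin (n + 1) → ℝ} (hx : x ∈ timelike n) :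
    mink e (kleinLift (kleinMap x)) = 0 ↔ mink e x = 0 := by
  have h0 := (pos_of_mem_timelike hx).ne'
  rw [← mink_kleinLift_kleinMap e h0]
  simp [h0]

/-- If the hyperplanes indexed by `A` meet at `s`, and near `s` only inside of the polyhedron, then
they cut out a face. -/
theorem mem_faces_of_timelike {A B : Finset (Fin P.m)} {s : Fin (n + 1) → ℝ}
    (hs : s ∈ timelike n) (hsA : ∀ i ∈ A, mink (P.e i) s = 0)
    (hsB : ∀ i ∈ B, mink (P.e i) s < 0)
    (hAB : ∀ x ∈ timelike n, (∀ i ∈ A, mink (P.e i) x = 0) → (∀ i ∈ B, mink (P.e i) x ≤ 0) →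
      ∀ i, mink (P.e i) x ≤ 0) :
    {p ∈ P.cl | ∀ i ∈ A, mink (P.e i) (kleinLift p) = 0} ∈
      P.faces (n - Module.finrank ℝ (Submodule.span ℝ ((fun i => spat (P.e i)) '' A))) := by
  have h0 := pos_of_mem_timelike hs
  refine P.mem_faces_of_forall_mem (s := kleinMap s)
    (fun i hi => (mink_kleinLift_kleinMap_eq_zero hs).2 (hsA i hi)) ?_
  have hmem : kleinMap s ∈ {p : EuclideanSpace ℝ (Fin n) |
      ‖p‖ < 1 ∧ ∀ i ∈ B, mink (P.e i) (kleinLift p) < 0} := by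
    refine ⟨norm_kleinMap_lt_one hs, fun i hi => ?_⟩
    have := hsB i hi
    rw [← mink_kleinLift_kleinMap _ h0.ne'] at this
    exact neg_of_mul_neg_right this h0.le
  filter_upwards [(isOpen_kleinLift_timelike_neg B P.e).mem_nhds hmem] with p hp hpA
  exact P.mem_cl_iff.2 ⟨hp.1.le, hAB _ (kleinLift_mem_timelike.2 hp.1) hpA
    fun i hi => (hp.2 i hi).le⟩

theorem mink_eq_zero_of_timelike (hra : P.IsRightAngled) {a b : Fin P.m} (hab : a ≠ b)
    {r : Fin (n + 1) → ℝ} (hra0 : mink (P.e a) r = 0) (hrb : mink (P.e b) r ≠ 0)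
    {B : Finset (Fin P.m)} {s : Fin (n + 1) → ℝ}
    (hs : s ∈ timelike n) (hsa : mink (P.e a) s = 0) (hsb : mink (P.e b) s = 0)
    (hsB : ∀ i ∈ B, mink (P.e i) s < 0)
    (hAB : ∀ x ∈ timelike n, mink (P.e a) x = 0 → mink (P.e b) x = 0 →
      (∀ i ∈ B, mink (P.e i) x ≤ 0) → ∀ i, mink (P.e i) x ≤ 0) :
    mink (P.e a) (P.e b) = 0 := by
  have hface := P.mem_faces_of_timelike (A := {a, b}) hs (by simp [hsa, hsb]) hsB
    (fun x hx h => hAB x hx (h a (by simp)) (h b (by simp)))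
  have h0 := pos_of_mem_timelike hs
  have hli : LinearIndependent ℝ ![spat (P.e a), spat (P.e b)] := by
    rw [LinearIndependent.pair_iff]
    intro c d hcd
    have htime : c * P.e a 0 + d * P.e b 0 = 0 := by
      rw [mink_eq] at hsa hsb
      have h1 : c * inner ℝ (spat (P.e a)) (spat s) + d * inner ℝ (spat (P.e b)) (spat s) = 0 := by
        rw [← real_inner_smul_left, ← real_inner_smul_left, ← inner_add_left, hcd, inner_zero_left]
      have h2 : (c * P.e a 0 + d * P.e b 0) * s 0 = 0 := by linear_combination h1 - c * hsa - d * hsb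
      exact (mul_eq_zero.1 h2).resolve_right h0.ne'
    have hvec : c • P.e a + d • P.e b = 0 :=
      ext_time_spat (by simpa using htime) (by simpa using hcd)
    have hd : d = 0 := by
      have h1 : mink (c • P.e a + d • P.e b) r = 0 := by
        rw [hvec, mink_comm, mink_zero_right]
      rw [mink_add_left, mink_smul_left, mink_smul_left, hra0] at h1
      simpa [hrb] using h1
    refine ⟨?_, hd⟩
    simpa [hd, spat_ne_zero_of_mink_self (P.unit a)] using hcd
  have hrank : Module.finrank ℝ (Submodule.span ℝ
      ((fun i => spat (P.e i)) '' ({a, b} : Finset (Fin P.m)))) = 2 := by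
    have h1 := finrank_span_eq_card hli
    rw [Matrix.range_cons, Matrix.range_cons, Matrix.range_empty, Set.union_empty,
      Set.singleton_union] at h1
    rw [Finset.coe_pair, Set.image_pair]
    simpa using h1
  rw [hrank] at hface
  have hin : ∀ i ∈ ({a, b} : Finset (Fin P.m)), P.faceInHyperplane (P.e i)
      {p ∈ P.cl | ∀ i ∈ ({a, b} : Finset (Fin P.m)), mink (P.e i) (kleinLift p) = 0} :=
    fun i hi x hx hxF =>
      (mink_kleinLift_kleinMap_eq_zero (mem_hyperboloid_iff.1 hx.1).1).1 (hxF.2 i hi)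
  exact hra a b hab ⟨_, hface, hin a (by simp), hin b (by simp)⟩

namespace IsIrredundant

variable {P} {J : Finset (Fin P.m)}

/-- A facet of a right-angled polyhedron is cut out by the facets orthogonal to it. -/
theorem nonpos_of_orthogonal (hJ : P.IsIrredundant J) (hra : P.IsRightAngled) {a : Fin P.m} (ha : a ∈ J)
    {x : Fin (n + 1) → ℝ} (hx : x ∈ timelike n) (hxa : mink (P.e a) x = 0)
    (hxJ : ∀ b ∈ J, b ≠ a → mink (P.e a) (P.e b) = 0 → mink (P.e b) x ≤ 0) (i : Fin P.m) :
    mink (P.e i) x ≤ 0 := by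
  obtain ⟨r, hr, hra0, hrJ⟩ := hJ.exists_mem a ha
  have hD : Convex ℝ (timelike n ∩ {x | minkLin (P.e a) x = 0}) :=
    convex_timelike.inter (convex_hyperplane (minkLin (P.e a)).isLinear 0)
  obtain ⟨J', hJ', hcut, hmem⟩ := exists_irredundant_subfamily hD (fun i => minkLin (P.e i))
    ⟨hr, hra0⟩ (J.erase a) fun i hi => hrJ i (Finset.mem_of_mem_erase hi) (Finset.ne_of_mem_erase hi)
  have hcut' : ∀ y ∈ timelike n, mink (P.e a) y = 0 → (∀ j ∈ J', mink (P.e j) y ≤ 0) →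
      ∀ i, mink (P.e i) y ≤ 0 := by
    intro y hy hya hyJ
    refine hJ.nonpos y hy fun j hj => ?_
    rcases eq_or_ne j a with rfl | hja
    · exact hya.le
    · exact hcut y ⟨hy, hya⟩ hyJ j (Finset.mem_erase.2 ⟨hja, hj⟩)
  refine hcut' x hx hxa (fun b hb => ?_) i
  obtain ⟨hba, hbJ⟩ := Finset.mem_erase.1 (hJ' hb)
  refine hxJ b hbJ hba ?_
  obtain ⟨s, ⟨hs, hsa⟩, hsb, hsJ⟩ := hmem b hb
  refine P.mink_eq_zero_of_timelike hra hba.symm hra0 (hrJ b hbJ hba).ne (B := J'.erase b) hs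
    hsa hsb (fun i hi => hsJ i (Finset.mem_of_mem_erase hi) (Finset.ne_of_mem_erase hi)) ?_
  intro y hy hya hyb hyB
  refine hcut' y hy hya fun j hj => ?_
  rcases eq_or_ne j b with rfl | hjb
  · exact hyb.le
  · exact hyB j (Finset.mem_erase.2 ⟨hjb, hj⟩)

theorem mink_nonpos (hJ : P.IsIrredundant J) (hra : P.IsRightAngled) {a b : Fin P.m} (ha : a ∈ J) (hb : b ∈ J)
    (hab : a ≠ b) : mink (P.e a) (P.e b) ≤ 0 := by
  obtain ⟨r, hr, hrb, hrJ⟩ := hJ.exists_mem b hb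
  have hs := hrJ a ha hab
  set c := mink (P.e a) r with hc
  have hra' : mink r (P.e a) = c := mink_comm _ _
  have hy : r - c • P.e a ∈ timelike n := by
    have hrr := mink_self_neg hr
    rw [mem_timelike_iff hr]
    simp only [mink_sub_left, mink_sub_right, mink_smul_left, mink_smul_right, hra', ← hc, P.unit]
    constructor <;> nlinarith
  have h := hJ.nonpos_of_orthogonal hra ha hy
    (by rw [mink_sub_right, mink_smul_right, P.unit, ← hc]; ring)
    (fun k hk hka hkort => by
      rw [mink_sub_right, mink_smul_right, mink_comm (P.e k) (P.e a), hkort, mul_zero, sub_zero]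
      rcases eq_or_ne k b with rfl | hkb
      · exact hrb.le
      · exact (hrJ k hk hkb).le) b
  rw [mink_sub_right, mink_smul_right, hrb, mink_comm (P.e b)] at h
  nlinarith

/-- Two facets of a right-angled polyhedron whose hyperplanes intersect are orthogonal. -/
theorem mink_eq_zero (hJ : P.IsIrredundant J) (hra : P.IsRightAngled) {a b : Fin P.m} (ha : a ∈ J) (hb : b ∈ J)
    (hab : a ≠ b) {x : Fin (n + 1) → ℝ} (hx : x ∈ timelike n) (hxa : mink (P.e a) x = 0)
    (hxb : mink (P.e b) x = 0) : mink (P.e a) (P.e b) = 0 := by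
  have hg := hJ.mink_nonpos hra ha hb hab
  obtain ⟨r, hr, hra0, hrJ⟩ := hJ.exists_mem a ha
  have hrb := hrJ b hb hab.symm
  set g := mink (P.e a) (P.e b) with hgdef
  have hba : mink (P.e b) (P.e a) = g := mink_comm _ _
  have hg1 : 0 < 1 - g ^ 2 := by
    have hv : mink x (P.e b - g • P.e a) = 0 := by
      rw [mink_sub_right, mink_smul_right, mink_comm x, mink_comm x, hxa, hxb]; ring
    have hvv : mink (P.e b - g • P.e a) (P.e b - g • P.e a) = 1 - g ^ 2 := by
      simp only [mink_sub_left, mink_sub_right, mink_smul_left, mink_smul_right, hba, ← hgdef,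
        P.unit]
      ring
    obtain ⟨h1, h2⟩ := mink_self_nonneg_of_orthogonal hx hv
    rw [hvv] at h1 h2
    refine h1.lt_of_ne fun h3 => hrb.ne ?_
    rw [sub_eq_zero.1 (h2 h3.symm), mink_smul_left, hra0, mul_zero]
  obtain ⟨u, hu, hue⟩ := P.exists_timelike_neg
  have hua := hue a
  have hub := hue b
  set s := mink (P.e a) u with hsdef
  set t := mink (P.e b) u with htdef
  have hua' : mink u (P.e a) = s := mink_comm _ _
  have hub' : mink u (P.e b) = t := mink_comm _ _
  have hα : 0 ≤ (g * t - s) / (1 - g ^ 2) := div_nonneg (by nlinarith) hg1.le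
  have hβ : 0 ≤ (g * s - t) / (1 - g ^ 2) := div_nonneg (by nlinarith) hg1.le
  have hαβ : (g * t - s) / (1 - g ^ 2) + g * ((g * s - t) / (1 - g ^ 2)) = -s := by
    field_simp; ring
  have hβα : g * ((g * t - s) / (1 - g ^ 2)) + (g * s - t) / (1 - g ^ 2) = -t := by
    field_simp; ring
  generalize (g * t - s) / (1 - g ^ 2) = α at *
  generalize (g * s - t) / (1 - g ^ 2) = β at *
  have huu := mink_self_neg hu
  have hya : mink (P.e a) (u + α • P.e a + β • P.e b) = 0 := by
    simp only [mink_add_right, mink_smul_right, P.unit, ← hgdef, ← hsdef]; linarith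
  have hyb : mink (P.e b) (u + α • P.e a + β • P.e b) = 0 := by
    simp only [mink_add_right, mink_smul_right, P.unit, hba, ← htdef]; linarith
  have huy : mink u (u + α • P.e a + β • P.e b) < 0 := by
    simp only [mink_add_right, mink_smul_right, hua', hub']
    nlinarith
  have hy : u + α • P.e a + β • P.e b ∈ timelike n := by
    refine (mem_timelike_iff hu).2 ⟨?_, huy.le⟩
    rwa [mink_add_left, mink_add_left, mink_smul_left, mink_smul_left, hya, hyb, mul_zero, mul_zero,
      add_zero, add_zero]
  refine P.mink_eq_zero_of_timelike hra hab hra0 hrb.ne (B := (J.erase a).erase b) hy hya hyb ?_ ?_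
  · intro k hk
    simp only [Finset.mem_erase] at hk
    have h1 := hJ.mink_nonpos hra hk.2.2 ha hk.2.1
    have h2 := hJ.mink_nonpos hra hk.2.2 hb hk.1
    simp only [mink_add_right, mink_smul_right]
    nlinarith [hue k]
  · intro y hy hya hyb hyB
    refine hJ.nonpos y hy fun k hk => ?_
    rcases eq_or_ne k a with rfl | hka
    · exact hya.le
    rcases eq_or_ne k b with rfl | hkb
    · exact hyb.le
    · exact hyB k (by simp [hka, hkb, hk])

theorem card_le_a (hJ : P.IsIrredundant J) (hn : 2 ≤ n) : J.card ≤ P.a (n - 1) := by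
  classical
  have hrank : ∀ j, Module.finrank ℝ (Submodule.span ℝ
      ((fun i => spat (P.e i)) '' ({j} : Finset (Fin P.m)))) = 1 := by
    intro j
    rw [Finset.coe_singleton, Set.image_singleton]
    exact finrank_span_singleton (spat_ne_zero_of_mink_self (P.unit j))
  rw [a, ← Set.ncard_coe_finset]
  refine Set.ncard_le_ncard_of_injOn
    (fun j => {p ∈ P.cl | ∀ i ∈ ({j} : Finset (Fin P.m)), mink (P.e i) (kleinLift p) = 0})
    (fun j hj => ?_) (fun j hj k hk hjk => ?_) (P.finite_faces hn)
  · obtain ⟨s, hs, hsj, hsJ⟩ := hJ.exists_mem j hj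
    rw [← hrank j]
    refine P.mem_faces_of_timelike (B := J.erase j) hs (by simpa using hsj)
      (fun i hi => hsJ i (Finset.mem_of_mem_erase hi) (Finset.ne_of_mem_erase hi)) ?_
    intro x hx hxj hxJ
    refine hJ.nonpos x hx fun k hk => ?_
    rcases eq_or_ne k j with rfl | hkj
    · exact (hxj k (by simp)).le
    · exact hxJ k (by simp [hkj, hk])
  · by_contra hne
    obtain ⟨s, hs, hsj, hsJ⟩ := hJ.exists_mem j hj
    have hmem : kleinMap s ∈
        {p ∈ P.cl | ∀ i ∈ ({j} : Finset (Fin P.m)), mink (P.e i) (kleinLift p) = 0} := by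
      refine ⟨P.kleinMap_mem_cl (timelike_subset_causal hs) (pos_of_mem_timelike hs)
        (hJ.nonpos s hs fun i hi => ?_), ?_⟩
      · rcases eq_or_ne i j with rfl | hij
        · exact hsj.le
        · exact (hsJ i hi hij).le
      · simpa [mink_kleinLift_kleinMap_eq_zero hs] using hsj
    beta_reduce at hjk
    rw [hjk] at hmem
    have h1 := hmem.2 k (by simp)
    rw [mink_kleinLift_kleinMap_eq_zero hs] at h1
    exact (hsJ k hk (Ne.symm hne)).ne h1

/-- Finite volume: at an ideal vertex no tangent direction stays in the polyhedron. -/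
theorem exists_mink_neg (hJ : P.IsIrredundant J) (hfv : P.FiniteVolume) {w : EuclideanSpace ℝ (Fin n)}
    (hw : w ∈ P.idealVerts) {e : Fin (n + 1) → ℝ} (hew : mink e (kleinLift w) = 0)
    (hee : 0 < mink e e) :
    ∃ j ∈ J, mink (P.e j) (kleinLift w) = 0 ∧ mink (P.e j) e < 0 := by
  by_contra! hcon
  have hwcl := P.verts_subset_cl hw.1
  have hww : mink (kleinLift w) (kleinLift w) = 0 := by
    rw [mink_self]; simp [hw.2]
  obtain ⟨C, hC⟩ : ∃ C : ℝ, ∀ p ∈ P.cl,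
      -mink e (kleinLift p) ≤ C * -mink (kleinLift w) (kleinLift p) := by
    obtain ⟨C, hC⟩ := (hfv.1.image fun v =>
      -mink e (kleinLift v) / -mink (kleinLift w) (kleinLift v)).bddAbove
    refine ⟨C, ?_⟩
    have hconv : Convex ℝ {p : EuclideanSpace ℝ (Fin n) |
        -mink e (kleinLift p) ≤ C * -mink (kleinLift w) (kleinLift p)} := by
      intro p hp q hq a b ha hb hab
      have hp' : -mink e (kleinLift p) ≤ C * -mink (kleinLift w) (kleinLift p) := hp
      have hq' : -mink e (kleinLift q) ≤ C * -mink (kleinLift w) (kleinLift q) := hq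
      show -mink e (kleinLift (a • p + b • q)) ≤ C * -mink (kleinLift w) (kleinLift (a • p + b • q))
      simp only [kleinLift_combo hab, mink_add_right, mink_smul_right]
      nlinarith [mul_le_mul_of_nonneg_left hp' ha, mul_le_mul_of_nonneg_left hq' hb]
    intro p hp
    rw [hfv.2] at hp
    refine convexHull_min (fun v hv => ?_) hconv hp
    show -mink e (kleinLift v) ≤ C * -mink (kleinLift w) (kleinLift v)
    rcases eq_or_ne w v with rfl | hwv
    · simp [hew, hww]
    · have h1 := mink_kleinLift_neg hw.2.le (P.mem_cl_iff.1 (P.verts_subset_cl hv)).1 hwv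
      exact (div_le_iff₀ (by linarith)).1 (hC ⟨v, hv, rfl⟩)
  obtain ⟨u, hu, hue⟩ := P.exists_timelike_neg
  have hwu : mink (kleinLift w) u < 0 := by
    rw [mink_comm]
    exact mink_neg_of_timelike_of_causal hu (kleinLift_mem_causal.2 hw.2.le) (kleinLift_ne_zero w)
  obtain ⟨ε, hε, hεs⟩ : ∃ ε : ℝ,
      C * (ε * -mink (kleinLift w) u) < mink e e - ε * mink e u ∧ 0 < ε := by
    have h1 : Filter.Tendsto (fun ε : ℝ => mink e e - ε * mink e u -
        C * (ε * -mink (kleinLift w) u)) (nhdsWithin 0 (Set.Ioi 0)) (nhds (mink e e)) := by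
      have : Continuous fun ε : ℝ => mink e e - ε * mink e u -
        C * (ε * -mink (kleinLift w) u) := by fun_prop
      simpa using (this.tendsto 0).mono_left nhdsWithin_le_nhds
    obtain ⟨ε, h2, h3⟩ := ((h1.eventually_const_lt hee).and self_mem_nhdsWithin).exists
    exact ⟨ε, by linarith, h3⟩
  set d := ε • u - e with hd
  have hwd : mink (kleinLift w) d < 0 := by
    rw [hd, mink_sub_right, mink_smul_right, mink_comm _ e, hew, sub_zero]
    exact mul_neg_of_pos_of_neg hεs hwu
  obtain ⟨t, ht0, htt, htJ, ht⟩ : ∃ t : ℝ, 0 < (kleinLift w + t • d) 0 ∧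
      2 * mink (kleinLift w) d + t * mink d d < 0 ∧
      (∀ j ∈ J, mink (P.e j) (kleinLift w) ≠ 0 → mink (P.e j) (kleinLift w + t • d) < 0) ∧
      0 < t := by
    have h1 : ∀ᶠ t : ℝ in nhds 0, 0 < (kleinLift w + t • d) 0 := by
      have : Continuous fun t : ℝ => (kleinLift w + t • d) 0 := by fun_prop
      refine (this.tendsto 0).eventually_const_lt (by simp)
    have h2 : ∀ᶠ t : ℝ in nhds 0, 2 * mink (kleinLift w) d + t * mink d d < 0 := by
      have : Continuous fun t : ℝ => 2 * mink (kleinLift w) d + t * mink d d := by fun_prop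
      refine (this.tendsto 0).eventually_lt_const (by simp; linarith)
    have h3 : ∀ᶠ t : ℝ in nhds 0, ∀ j ∈ J, mink (P.e j) (kleinLift w) ≠ 0 →
        mink (P.e j) (kleinLift w + t • d) < 0 := by
      refine (Filter.eventually_all_finset J).2 fun j _ => ?_
      by_cases hj : mink (P.e j) (kleinLift w) = 0
      · simp [hj]
      have : Continuous fun t : ℝ => mink (P.e j) (kleinLift w + t • d) :=
        (continuous_mink_right _).comp (by fun_prop)
      filter_upwards [(this.tendsto 0).eventually_lt_const (u := 0)
        (by simpa using ((P.mem_cl_iff.1 hwcl).2 j).lt_of_ne hj)] with t ht _ using ht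
    obtain ⟨t, ⟨h1, h2, h3⟩, ht⟩ := (((h1.and (h2.and h3)).filter_mono
      (nhdsWithin_le_nhds (s := Set.Ioi 0))).and self_mem_nhdsWithin).exists
    exact ⟨t, h1, h2, h3, ht⟩
  set y := kleinLift w + t • d with hy
  have hyt : y ∈ timelike n := by
    have hyy : mink y y < 0 := by
      simp only [hy, mink_add_left, mink_add_right, mink_smul_left, mink_smul_right, hww,
        mink_comm d (kleinLift w)]
      nlinarith [mul_neg_of_pos_of_neg ht htt]
    rw [mink_self] at hyy
    exact lt_of_pow_lt_pow_left₀ 2 ht0.le (by linarith)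
  have hycl := P.kleinMap_mem_cl (timelike_subset_causal hyt) ht0 <|
    hJ.nonpos y hyt fun j hj => by
      by_cases hjw : mink (P.e j) (kleinLift w) = 0
      · have h1 := hcon j hj hjw
        have h2 := hue j
        simp only [hy, hd, mink_add_right, mink_smul_right, mink_sub_right, hjw, zero_add]
        exact mul_nonpos_of_nonneg_of_nonpos ht.le (by nlinarith)
      · exact (htJ j hj hjw).le
  have hfin := mul_le_mul_of_nonneg_left (hC _ hycl) ht0.le
  have h1 := mink_kleinLift_kleinMap e ht0.ne'
  have h2 := mink_kleinLift_kleinMap (kleinLift w) ht0.ne'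
  have h3 : mink e y = t * (ε * mink e u - mink e e) := by
    simp only [hy, hd, mink_add_right, mink_smul_right, mink_sub_right, hew, zero_add]
  have h4 : mink (kleinLift w) y = t * (ε * mink (kleinLift w) u) := by
    simp only [hy, hd, mink_add_right, mink_smul_right, mink_sub_right, hww, zero_add,
      mink_comm _ e, hew, sub_zero]
  have h5 := mul_lt_mul_of_pos_left hε ht
  have h6 : -mink e y ≤ C * -mink (kleinLift w) y := by
    rw [← h1, ← h2]; linarith
  rw [h3, h4] at h6
  linarith

end IsIrredundant

end HypPolyhedron
/-! ### Finite volume in terms of generators of the cone -/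

/-- A polytope has finitely many exposed points and is their convex hull. -/
theorem finite_exposed_and_eq_convexHull {E : Type*} [NormedAddCommGroup E] [NormedSpace ℝ E]
    {S : Set E} (hS : S.Finite) :
    {v | IsExposed ℝ (convexHull ℝ S) {v}}.Finite ∧
      convexHull ℝ S = convexHull ℝ {v | IsExposed ℝ (convexHull ℝ S) {v}} := by
  have hsub : {v | IsExposed ℝ (convexHull ℝ S) {v}} ⊆ S := fun v hv =>
    extremePoints_convexHull_subset (IsExtreme.mem_extremePoints (IsExposed.isExtreme hv))
  refine ⟨hS.subset hsub, Set.Subset.antisymm ?_ (convexHull_mono hsub)⟩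
  have hfin : ((convexHull ℝ S).extremePoints ℝ).Finite :=
    hS.subset extremePoints_convexHull_subset
  have hKM := closure_convexHull_extremePoints (hS.isCompact_convexHull ℝ) (convex_convexHull ℝ S)
  rw [(hfin.isClosed_convexHull ℝ).closure_eq] at hKM
  refine hKM.ge.trans (convexHull_mono fun v hv => ?_)
  have hvS : v ∈ S := extremePoints_convexHull_subset hv
  have hvnot : v ∉ convexHull ℝ (S \ {v}) := fun h =>
    (((convex_convexHull ℝ S).mem_extremePoints_iff_mem_sdiff_convexHull_sdiff).1 hv).2
      (convexHull_mono (Set.sdiff_subset_sdiff_left (subset_convexHull ℝ S)) h)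
  obtain ⟨l, u, hlu, huv⟩ := geometric_hahn_banach_closed_point (convex_convexHull ℝ (S \ {v}))
    (hS.sdiff.isClosed_convexHull ℝ) hvnot
  have key : ∀ y ∈ convexHull ℝ S, y ≠ v → l y < l v := by
    intro y hy hyv
    rcases (S \ {v}).eq_empty_or_nonempty with hemp | hne
    · have : S = {v} := Set.Subset.antisymm (Set.sdiff_eq_empty.1 hemp) (by simpa using hvS)
      rw [this, convexHull_singleton] at hy
      exact absurd hy hyv
    · rw [← Set.insert_sdiff_self_of_mem hvS, convexHull_insert hne, convexJoin_singleton_left] at hy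
      obtain ⟨z, hz, a, b, ha, hb, hab, rfl⟩ := Set.mem_iUnion₂.1 hy
      have hb' : b ≠ 0 := by
        rintro rfl
        apply hyv
        simp at hab
        simp [hab]
      have hbpos := hb.lt_of_ne' hb'
      have h1 := hlu z hz
      simp only [map_add, map_smul, smul_eq_mul]
      have h2 : a = 1 - b := by linarith
      rw [h2]
      nlinarith
  intro _
  refine ⟨l, ?_⟩
  ext y
  simp only [Set.mem_singleton_iff, Set.mem_ofPred_eq]
  constructor
  · rintro rfl
    refine ⟨subset_convexHull ℝ S hvS, fun z hz => ?_⟩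
    rcases eq_or_ne z y with rfl | hzy
    · exact le_rfl
    · exact (key z hz hzy).le
  · rintro ⟨hy, hmax⟩
    by_contra hyv
    exact absurd (hmax v (subset_convexHull ℝ S hvS)) (not_le.2 (key y hy hyv))

namespace HypPolyhedron

variable {n : ℕ} (P : HypPolyhedron n)

theorem exists_eq_sum_of_finiteVolume (hfv : P.FiniteVolume) {x : Fin (n + 1) → ℝ}
    (hx : x ∈ causal n) (hxe : ∀ i, mink (P.e i) x ≤ 0) :
    ∃ c : EuclideanSpace ℝ (Fin n) → ℝ, (∀ v ∈ hfv.1.toFinset, 0 ≤ c v) ∧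
      x = ∑ v ∈ hfv.1.toFinset, c v • kleinLift v := by
  by_cases h0 : x = 0
  · exact ⟨0, by simp, by simp [h0]⟩
  have hpos := pos_of_mem_causal hx h0
  have hp := P.kleinMap_mem_cl hx hpos hxe
  rw [hfv.2, ← hfv.1.coe_toFinset, Finset.mem_convexHull'] at hp
  obtain ⟨c, hc, hc1, hcx⟩ := hp
  refine ⟨fun v => x 0 * c v, fun v hv => mul_nonneg hpos.le (hc v hv), ?_⟩
  have h1 : kleinLift (kleinMap x) = ∑ v ∈ hfv.1.toFinset, c v • kleinLift v := by
    apply ext_time_spat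
    · simp [hc1]
    · simp [hcx]
  simp only [mul_smul]
  rw [← Finset.smul_sum, ← h1, smul_kleinLift_kleinMap hpos.ne']

theorem finiteVolume_of_generators {ι : Type*} (s : Finset ι) (g : ι → Fin (n + 1) → ℝ)
    (hg : ∀ i ∈ s, g i ∈ causal n) (hg0 : ∀ i ∈ s, g i ≠ 0)
    (hge : ∀ i ∈ s, ∀ k, mink (P.e k) (g i) ≤ 0)
    (hgen : ∀ x ∈ causal n, (∀ k, mink (P.e k) x ≤ 0) →
      ∃ c : ι → ℝ, (∀ i ∈ s, 0 ≤ c i) ∧ x = ∑ i ∈ s, c i • g i) : P.FiniteVolume := by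
  have hpos : ∀ i ∈ s, 0 < g i 0 := fun i hi => pos_of_mem_causal (hg i hi) (hg0 i hi)
  have hcl : P.cl = convexHull ℝ ((fun i => kleinMap (g i)) '' s) := by
    apply Set.Subset.antisymm
    · intro p hp
      rw [mem_cl_iff] at hp
      obtain ⟨c, hc, hcp⟩ := hgen (kleinLift p) (kleinLift_mem_causal.2 hp.1) hp.2
      have h1 : ∑ i ∈ s, c i * g i 0 = 1 := by
        simpa [Finset.sum_apply] using (congrFun hcp 0).symm
      have h2 : p = ∑ i ∈ s, (c i * g i 0) • kleinMap (g i) := by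
        have := congrArg spat hcp
        rw [spat_kleinLift, map_sum] at this
        rw [this]
        refine Finset.sum_congr rfl fun i hi => ?_
        rw [map_smul, kleinMap_eq, smul_smul, mul_assoc, mul_inv_cancel₀ (hpos i hi).ne', mul_one]
      rw [h2]
      exact (convex_convexHull ℝ _).sum_mem (fun i hi => mul_nonneg (hc i hi) (hpos i hi).le) h1
        fun i hi => subset_convexHull ℝ _ ⟨i, hi, rfl⟩
    · refine convexHull_min ?_ P.convex_cl
      rintro _ ⟨i, hi, rfl⟩
      exact P.kleinMap_mem_cl (hg i hi) (hpos i hi) (hge i hi)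
  have := finite_exposed_and_eq_convexHull (s.finite_toSet.image fun i => kleinMap (g i))
  rw [← hcl] at this
  exact this

end HypPolyhedron

/-! ### Isometric parametrization of a hyperplane -/

/-- The reflection in the hyperplane orthogonal to `v`. -/
def minkReflection {n : ℕ} (v : Fin (n + 1) → ℝ) : (Fin (n + 1) → ℝ) →ₗ[ℝ] (Fin (n + 1) → ℝ) :=
  LinearMap.id - (2 / mink v v) • (minkLin v).smulRight v

theorem minkReflection_apply {n : ℕ} (v x : Fin (n + 1) → ℝ) :
    minkReflection v x = x - (2 / mink v v * mink v x) • v := by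
  simp [minkReflection, smul_smul]

theorem mink_minkReflection {n : ℕ} {v : Fin (n + 1) → ℝ} (hv : mink v v ≠ 0)
    (x y : Fin (n + 1) → ℝ) : mink (minkReflection v x) (minkReflection v y) = mink x y := by
  simp only [minkReflection_apply, mink_sub_left, mink_sub_right, mink_smul_left, mink_smul_right,
    mink_comm x v]
  field_simp
  ring

theorem minkReflection_minkReflection {n : ℕ} {v : Fin (n + 1) → ℝ} (hv : mink v v ≠ 0)
    (x : Fin (n + 1) → ℝ) : minkReflection v (minkReflection v x) = x := by
  simp only [minkReflection_apply, mink_sub_right, mink_smul_right]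
  rw [sub_sub, ← add_smul]
  have : 2 / mink v v * mink v x +
      2 / mink v v * (mink v x - 2 / mink v v * mink v x * mink v v) = 0 := by
    field_simp
    ring
  rw [this, zero_smul, sub_zero]

theorem minkReflection_mem_timelike {n : ℕ} {v x : Fin (n + 1) → ℝ} (hv : 0 < mink v v)
    (hx : x ∈ timelike n) : minkReflection v x ∈ timelike n := by
  have h := mink_self_neg hx
  refine (mem_timelike_iff hx).2 ⟨by rwa [mink_minkReflection hv.ne'], ?_⟩
  rw [minkReflection_apply, mink_sub_right, mink_smul_right, mink_comm x v]
  have : 0 ≤ 2 / mink v v * mink v x * mink v x := by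
    rw [mul_assoc]
    exact mul_nonneg (div_nonneg zero_le_two hv.le) (mul_self_nonneg _)
  linarith

/-- The inclusion `ℝ^{k+1} → ℝ^{k+2}` as the hyperplane where the last coordinate vanishes. -/
def snocZero (k : ℕ) : (Fin (k + 1) → ℝ) →ₗ[ℝ] (Fin (k + 2) → ℝ) where
  toFun x := Fin.snoc (α := fun _ => ℝ) x 0
  map_add' x y := by
    funext i
    refine Fin.lastCases ?_ (fun j => ?_) i <;> simp
  map_smul' c x := by
    funext i
    refine Fin.lastCases ?_ (fun j => ?_) i <;> simp

theorem snocZero_last {k : ℕ} (x : Fin (k + 1) → ℝ) : snocZero k x (Fin.last (k + 1)) = 0 :=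
  Fin.snoc_last (α := fun _ => ℝ) 0 x

theorem snocZero_castSucc {k : ℕ} (x : Fin (k + 1) → ℝ) (i : Fin (k + 1)) :
    snocZero k x i.castSucc = x i :=
  Fin.snoc_castSucc (α := fun _ => ℝ) 0 x i

theorem snocZero_zero {k : ℕ} (x : Fin (k + 1) → ℝ) : snocZero k x 0 = x 0 :=
  snocZero_castSucc x 0

theorem mink_snocZero {k : ℕ} (x y : Fin (k + 1) → ℝ) :
    mink (snocZero k x) (snocZero k y) = mink x y := by
  simp only [mink, snocZero_zero, Fin.sum_univ_castSucc, Fin.succ_castSucc, snocZero_castSucc,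
    Fin.succ_last, snocZero_last, mul_zero, add_zero]

theorem mink_single_last {k : ℕ} (x : Fin (k + 2) → ℝ) :
    mink (Pi.single (Fin.last (k + 1)) 1) x = x (Fin.last (k + 1)) := by
  simp only [mink, Fin.sum_univ_castSucc, Fin.succ_castSucc, Fin.succ_last]
  simp [Pi.single_apply, Fin.ext_iff]
  exact Finset.sum_eq_zero fun i _ => if_neg i.isLt.ne

theorem exists_minkReflection_eq {k : ℕ} {e : Fin (k + 2) → ℝ} (he : mink e e = 1) :
    ∃ v : Fin (k + 2) → ℝ, ∃ σ : ℝ, 0 < mink v v ∧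
      minkReflection v e = σ • Pi.single (Fin.last (k + 1)) 1 := by
  set b : Fin (k + 2) → ℝ := Pi.single (Fin.last (k + 1)) 1 with hb
  have hbb : mink b b = 1 := by rw [hb, mink_single_last]; simp
  obtain ⟨σ, hσ, hσe⟩ : ∃ σ : ℝ, σ * σ = 1 ∧ σ * mink b e ≤ 0 := by
    rcases le_total (mink b e) 0 with h | h
    · exact ⟨1, by norm_num, by linarith⟩
    · exact ⟨-1, by norm_num, by linarith⟩
  have hvv : mink (e - σ • b) (e - σ • b) = 2 - 2 * (σ * mink b e) := by
    simp only [mink_sub_left, mink_sub_right, mink_smul_left, mink_smul_right, he, hbb,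
      mink_comm e b]
    linear_combination hσ
  refine ⟨e - σ • b, σ, by rw [hvv]; linarith, ?_⟩
  rw [minkReflection_apply, hvv, mink_sub_left, mink_smul_left, he]
  have : 2 / (2 - 2 * (σ * mink b e)) * (1 - σ * mink b e) = 1 := by
    have : 1 - σ * mink b e ≠ 0 := by linarith
    rw [show 2 - 2 * (σ * mink b e) = 2 * (1 - σ * mink b e) by ring]
    field_simp
  rw [this, one_smul, sub_sub_cancel]

/-- A hyperplane orthogonal to a unit spacelike vector is a copy of the Minkowski space of one
dimension less. -/
theorem exists_isometry_hyperplane {k : ℕ} {e : Fin (k + 2) → ℝ} (he : mink e e = 1) :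
    ∃ φ : (Fin (k + 1) → ℝ) →ₗ[ℝ] (Fin (k + 2) → ℝ),
      (∀ x y, mink (φ x) (φ y) = mink x y) ∧ (∀ x, mink e (φ x) = 0) ∧
      (∀ y, mink e y = 0 → ∃ x, φ x = y) ∧
      (∀ x, φ x ∈ timelike (k + 1) ↔ x ∈ timelike k) ∧
      (∀ x, φ x ∈ causal (k + 1) ↔ x ∈ causal k) := by
  obtain ⟨v, σ, hv, hve⟩ := exists_minkReflection_eq he
  have hφ : ∀ x y, mink (minkReflection v (snocZero k x)) (minkReflection v (snocZero k y)) =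
      mink x y := fun x y => by rw [mink_minkReflection hv.ne', mink_snocZero]
  have ht : (kleinLift 0 : Fin (k + 1) → ℝ) ∈ timelike k := kleinLift_mem_timelike.2 (by simp)
  have ht' : snocZero k (kleinLift 0) ∈ timelike (k + 1) := by
    refine (mem_timelike_iff (kleinLift_mem_timelike.2 (show ‖0‖ < 1 by simp))).2
      ⟨by rw [mink_snocZero]; exact mink_self_neg ht, ?_⟩
    rw [mink_comm, mink_kleinLift, snocZero_zero]
    simp
  have ht'' := minkReflection_mem_timelike hv ht'
  refine ⟨minkReflection v ∘ₗ snocZero k, hφ, fun x => ?_, fun y hy => ?_, fun x => ?_, fun x => ?_⟩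
  · rw [← mink_minkReflection hv.ne', hve, LinearMap.comp_apply,
      minkReflection_minkReflection hv.ne', mink_smul_left, mink_single_last, snocZero_last,
      mul_zero]
  · have hσ : σ ≠ 0 := by
      rintro rfl
      have h1 := mink_minkReflection hv.ne' e e
      rw [hve, zero_smul, mink_zero_right, he] at h1
      exact zero_ne_one h1
    have hlast : minkReflection v y (Fin.last (k + 1)) = 0 := by
      rw [← mink_minkReflection hv.ne', hve, mink_smul_left, mink_single_last] at hy
      exact (mul_eq_zero.1 hy).resolve_left hσ
    refine ⟨fun i => minkReflection v y i.castSucc, ?_⟩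
    have : snocZero k (fun i => minkReflection v y i.castSucc) = minkReflection v y := by
      funext i
      refine Fin.lastCases ?_ (fun j => ?_) i
      · rw [snocZero_last, hlast]
      · rw [snocZero_castSucc]
    rw [LinearMap.comp_apply, this, minkReflection_minkReflection hv.ne']
  · rw [mem_timelike_iff ht, mem_timelike_iff ht'', LinearMap.comp_apply, hφ, hφ]
  · rw [mem_causal_iff ht, mem_causal_iff ht'', LinearMap.comp_apply, hφ, hφ]

theorem injective_of_mink_eq {k l : ℕ} (φ : (Fin (k + 1) → ℝ) →ₗ[ℝ] (Fin (l + 1) → ℝ))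
    (hφ : ∀ x y, mink (φ x) (φ y) = mink x y) : Function.Injective φ := by
  rw [← LinearMap.ker_eq_bot, LinearMap.ker_eq_bot']
  intro x hx
  have h : ∀ y, mink y x = 0 := fun y => by rw [← hφ, hx, mink_zero_right]
  exact (mink_self_nonneg_of_orthogonal (kleinLift_mem_timelike.2 (show ‖0‖ < 1 by simp))
    (h _)).2 (h x)
/-! ### The facets of a right-angled polyhedron -/

namespace HypPolyhedron

theorem IsIrredundant.nonpos_of_causal {n : ℕ} {P : HypPolyhedron n} {J : Finset (Fin P.m)}
    (hJ : P.IsIrredundant J) (hra : P.IsRightAngled) {a : Fin P.m} (ha : a ∈ J)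
    {x : Fin (n + 1) → ℝ} (hx : x ∈ causal n) (hxa : mink (P.e a) x = 0)
    (hxJ : ∀ b ∈ J, mink (P.e a) (P.e b) = 0 → mink (P.e b) x ≤ 0) (i : Fin P.m) :
    mink (P.e i) x ≤ 0 := by
  obtain ⟨r, hr, hra0, hrJ⟩ := hJ.exists_mem a ha
  have key : ∀ ε : ℝ, 0 < ε → mink (P.e i) x + ε * mink (P.e i) r ≤ 0 := by
    intro ε hε
    have h := hJ.nonpos_of_orthogonal hra ha (add_mem_timelike (smul_mem_timelike hε hr) hx)
      (by rw [mink_add_right, mink_smul_right, hra0, hxa]; ring) (fun b hb hba hab => ?_) i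
    · rwa [mink_add_right, mink_smul_right, add_comm] at h
    · rw [mink_add_right, mink_smul_right]
      have h1 := hxJ b hb hab
      have h2 := mul_neg_of_pos_of_neg hε (hrJ b hb hba)
      linarith
  have hlim : Filter.Tendsto (fun ε : ℝ => mink (P.e i) x + ε * mink (P.e i) r)
      (nhdsWithin 0 (Set.Ioi 0)) (nhds (mink (P.e i) x + 0 * mink (P.e i) r)) :=
    ((by fun_prop : Continuous fun ε : ℝ => mink (P.e i) x + ε * mink (P.e i) r).tendsto 0).mono_left
      nhdsWithin_le_nhds
  rw [zero_mul, add_zero] at hlim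
  exact le_of_tendsto hlim (eventually_nhdsWithin_of_forall key)

/-- `φ` parametrizes the hyperplane `H_{e_a}`, and `Q` is bounded by the hyperplanes of `P` indexed
by `J` and orthogonal to it. -/
structure IsFacet {k : ℕ} (P : HypPolyhedron (k + 1)) (J : Finset (Fin P.m)) (a : Fin P.m)
    (Q : HypPolyhedron k) (φ : (Fin (k + 1) → ℝ) →ₗ[ℝ] (Fin (k + 2) → ℝ))
    (f : Fin Q.m → Fin P.m) : Prop where
  mink_map : ∀ x y, mink (φ x) (φ y) = mink x y
  mink_map_eq_zero : ∀ x, mink (P.e a) (φ x) = 0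
  exists_map_eq : ∀ y, mink (P.e a) y = 0 → ∃ x, φ x = y
  map_mem_timelike : ∀ x, φ x ∈ timelike (k + 1) ↔ x ∈ timelike k
  map_mem_causal : ∀ x, φ x ∈ causal (k + 1) ↔ x ∈ causal k
  map_normal : ∀ i, φ (Q.e i) = P.e (f i)
  injective : Function.Injective f
  mem_range : ∀ b, b ∈ Set.range f ↔ b ∈ J ∧ mink (P.e a) (P.e b) = 0

variable {k : ℕ} {P : HypPolyhedron (k + 1)} {J : Finset (Fin P.m)} {a : Fin P.m}

theorem IsIrredundant.exists_isFacet (hJ : P.IsIrredundant J) (ha : a ∈ J) :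
    ∃ (Q : HypPolyhedron k) (φ : (Fin (k + 1) → ℝ) →ₗ[ℝ] (Fin (k + 2) → ℝ))
      (f : Fin Q.m → Fin P.m), P.IsFacet J a Q φ f := by
  classical
  obtain ⟨φ, hφ, hφ0, hsurj, htime, hcaus⟩ := exists_isometry_hyperplane (P.unit a)
  set N := J.filter fun b => mink (P.e a) (P.e b) = 0 with hN
  let f : Fin N.card → Fin P.m := fun i => (N.equivFin.symm i).1
  have hfN : ∀ i, f i ∈ N := fun i => (N.equivFin.symm i).2
  have hf : ∀ i, f i ∈ J ∧ mink (P.e a) (P.e (f i)) = 0 := fun i => Finset.mem_filter.1 (hfN i)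
  choose q hq using fun i => hsurj (P.e (f i)) (hf i).2
  obtain ⟨r, hr, hra0, hrJ⟩ := hJ.exists_mem a ha
  obtain ⟨t, rfl⟩ := hsurj r hra0
  refine ⟨⟨N.card, q, fun i => by rw [← hφ, hq, P.unit],
    nonempty_interior_kleinMap_image q ((htime t).1 hr) fun i => ?_⟩, φ, f, hφ, hφ0, hsurj, htime,
    hcaus, hq, fun i j hij => N.equivFin.symm.injective (Subtype.ext hij), fun b => ?_⟩
  · rw [← hφ, hq]
    refine hrJ _ (hf i).1 fun h => ?_
    have h1 := (hf i).2
    rw [h, P.unit] at h1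
    exact one_ne_zero h1
  · refine ⟨?_, fun hb => ?_⟩
    · rintro ⟨i, rfl⟩
      exact hf i
    · exact ⟨N.equivFin ⟨b, Finset.mem_filter.2 hb⟩, by simp [f]⟩

namespace IsFacet

variable {Q : HypPolyhedron k} {φ : (Fin (k + 1) → ℝ) →ₗ[ℝ] (Fin (k + 2) → ℝ)}
  {f : Fin Q.m → Fin P.m}

theorem mink_normal (hQ : P.IsFacet J a Q φ f) (i : Fin Q.m) (x : Fin (k + 1) → ℝ) :
    mink (Q.e i) x = mink (P.e (f i)) (φ x) := by
  rw [← hQ.mink_map, hQ.map_normal]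

theorem map_ne_zero (hQ : P.IsFacet J a Q φ f) {x : Fin (k + 1) → ℝ} (hx : x ≠ 0) : φ x ≠ 0 :=
  fun h => hx (injective_of_mink_eq φ hQ.mink_map (by rw [h, map_zero]))

theorem forall_nonpos_iff (hQ : P.IsFacet J a Q φ f) (hJ : P.IsIrredundant J)
    (hra : P.IsRightAngled) (ha : a ∈ J) {x : Fin (k + 1) → ℝ} (hx : x ∈ causal k) :
    (∀ i, mink (Q.e i) x ≤ 0) ↔ ∀ i, mink (P.e i) (φ x) ≤ 0 := by
  refine ⟨fun h => ?_, fun h i => by rw [hQ.mink_normal]; exact h _⟩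
  refine hJ.nonpos_of_causal hra ha ((hQ.map_mem_causal x).2 hx) (hQ.mink_map_eq_zero x)
    fun b hb hab => ?_
  obtain ⟨i, rfl⟩ := (hQ.mem_range b).2 ⟨hb, hab⟩
  rw [← hQ.mink_normal]
  exact h i

theorem finiteVolume (hQ : P.IsFacet J a Q φ f) (hJ : P.IsIrredundant J)
    (hra : P.IsRightAngled) (ha : a ∈ J) (hfv : P.FiniteVolume) : Q.FiniteVolume := by
  classical
  have hex : ∀ v : EuclideanSpace ℝ (Fin (k + 1)), ∃ x, mink (P.e a) (kleinLift v) = 0 →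
      φ x = kleinLift v := fun v => by
    by_cases hv : mink (P.e a) (kleinLift v) = 0
    · obtain ⟨x, hx⟩ := hQ.exists_map_eq _ hv
      exact ⟨x, fun _ => hx⟩
    · exact ⟨0, fun h => absurd h hv⟩
  choose g hg using hex
  have hcl : ∀ v ∈ hfv.1.toFinset, ‖v‖ ≤ 1 ∧ ∀ i, mink (P.e i) (kleinLift v) ≤ 0 := fun v hv =>
    P.mem_cl_iff.1 (P.verts_subset_cl (hfv.1.mem_toFinset.1 hv))
  have hgc : ∀ v ∈ hfv.1.toFinset.filter fun v => mink (P.e a) (kleinLift v) = 0,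
      g v ∈ causal k := fun v hv => by
    rw [Finset.mem_filter] at hv
    rw [← hQ.map_mem_causal, hg v hv.2, kleinLift_mem_causal]
    exact (hcl v hv.1).1
  refine Q.finiteVolume_of_generators
    (hfv.1.toFinset.filter fun v => mink (P.e a) (kleinLift v) = 0) g hgc
    (fun v hv h0 => ?_) (fun v hv => ?_) fun x hx hxe => ?_
  · have := hg v (Finset.mem_filter.1 hv).2
    rw [h0, map_zero] at this
    exact kleinLift_ne_zero v this.symm
  · rw [hQ.forall_nonpos_iff hJ hra ha (hgc v hv), hg v (Finset.mem_filter.1 hv).2]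
    exact (hcl v (Finset.mem_filter.1 hv).1).2
  · rw [hQ.forall_nonpos_iff hJ hra ha hx] at hxe
    obtain ⟨c, hc, hcx⟩ := P.exists_eq_sum_of_finiteVolume hfv ((hQ.map_mem_causal x).2 hx) hxe
    refine ⟨c, fun v hv => hc v (Finset.mem_filter.1 hv).1, ?_⟩
    have hsum : ∑ v ∈ hfv.1.toFinset, c v * mink (P.e a) (kleinLift v) = 0 := by
      rw [← hQ.mink_map_eq_zero x, hcx, mink_sum_right]
      simp only [mink_smul_right]
    have hzero := (Finset.sum_eq_zero_iff_of_nonpos fun v hv =>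
      mul_nonpos_of_nonneg_of_nonpos (hc v hv) ((hcl v hv).2 a)).1 hsum
    apply injective_of_mink_eq φ hQ.mink_map
    rw [hcx, map_sum, Finset.sum_filter]
    refine Finset.sum_congr rfl fun v hv => ?_
    split_ifs with h
    · rw [map_smul, hg v h]
    · rw [(mul_eq_zero.1 (hzero v hv)).resolve_right h, zero_smul]

theorem isRightAngled (hQ : P.IsFacet J a Q φ f) (hJ : P.IsIrredundant J)
    (hra : P.IsRightAngled) (hk : 3 ≤ k) : Q.IsRightAngled := by
  rintro i j hij ⟨F, ⟨hexp, -, hdim⟩, hi, hj⟩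
  obtain ⟨z, hz, hz1, -⟩ := Q.exists_forall_neg_of_convex (hexp.convex Q.convex_cl) hexp.subset
    (nontrivial_of_sdim_pos (by omega)) ∅ (by simp)
  have hzcl := (Q.mem_cl_iff.1 (hexp.subset hz)).2
  obtain ⟨x, hx, rfl⟩ : z ∈ kleinMap '' Q.carrier := by
    rw [image_carrier]
    exact ⟨hz1, hzcl⟩
  rw [← hQ.mink_map, hQ.map_normal, hQ.map_normal]
  refine hJ.mink_eq_zero hra ((hQ.mem_range _).1 ⟨i, rfl⟩).1 ((hQ.mem_range _).1 ⟨j, rfl⟩).1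
    (hQ.injective.ne hij) ((hQ.map_mem_timelike x).2 (mem_hyperboloid_iff.1 hx.1).1) ?_ ?_
  · rw [← hQ.mink_normal]
    exact hi x hx hz
  · rw [← hQ.mink_normal]
    exact hj x hx hz

theorem not_isCompactPoly (hQ : P.IsFacet J a Q φ f) (hJ : P.IsIrredundant J)
    (hra : P.IsRightAngled) (ha : a ∈ J) {w : EuclideanSpace ℝ (Fin (k + 1))}
    (hw : w ∈ P.idealVerts) (haw : mink (P.e a) (kleinLift w) = 0) : ¬ Q.IsCompactPoly := by
  intro hc
  obtain ⟨hwcl, hw1⟩ := P.mem_idealVerts_iff.1 hw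
  obtain ⟨z, hz⟩ := hQ.exists_map_eq _ haw
  have hzc : z ∈ causal k := by
    rw [← hQ.map_mem_causal, hz, kleinLift_mem_causal]
    exact hw1.le
  have hz0 : z ≠ 0 := by
    rintro rfl
    rw [map_zero] at hz
    exact kleinLift_ne_zero w hz.symm
  have hpos := pos_of_mem_causal hzc hz0
  have hzcl : kleinMap z ∈ Q.cl := by
    refine Q.kleinMap_mem_cl hzc hpos ((hQ.forall_nonpos_iff hJ hra ha hzc).2 ?_)
    rw [hz]
    exact (P.mem_cl_iff.1 hwcl).2
  have hznt : z ∉ timelike k := by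
    rw [← hQ.map_mem_timelike, hz, kleinLift_mem_timelike]
    exact hw1.not_lt
  have hz1 : ‖kleinMap z‖ = 1 := by
    refine (norm_kleinMap_le_one hzc hpos).eq_of_not_lt fun h => hznt ?_
    rw [← smul_kleinLift_kleinMap hpos.ne']
    exact smul_mem_timelike hpos (kleinLift_mem_timelike.2 h)
  exact (hc.2 _ (Q.mem_verts_of_norm_eq_one hzcl hz1)).ne hz1

/-- At every ideal vertex of a facet, some other facet is parallel to it. -/
theorem exists_mink_neg (hQ : P.IsFacet J a Q φ f) (hJ : P.IsIrredundant J)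
    (hra : P.IsRightAngled) (ha : a ∈ J) (hfv : P.FiniteVolume) {w : EuclideanSpace ℝ (Fin k)}
    (hw : w ∈ Q.idealVerts) :
    ∃ j ∈ J, mink (P.e j) (φ (kleinLift w)) = 0 ∧ mink (P.e j) (P.e a) < 0 := by
  obtain ⟨hwcl, hw1⟩ := Q.mem_idealVerts_iff.1 hw
  have hwc : kleinLift w ∈ causal k := kleinLift_mem_causal.2 hw1.le
  have hwn : kleinLift w ∉ timelike k := fun h => (kleinLift_mem_timelike.1 h).ne hw1
  have hφc := (hQ.map_mem_causal _).2 hwc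
  have hpos := pos_of_mem_causal hφc (hQ.map_ne_zero (kleinLift_ne_zero w))
  have hcl := P.kleinMap_mem_cl hφc hpos
    ((hQ.forall_nonpos_iff hJ hra ha hwc).1 (Q.mem_cl_iff.1 hwcl).2)
  have hone : ‖kleinMap (φ (kleinLift w))‖ = 1 := by
    refine (norm_kleinMap_le_one hφc hpos).eq_of_not_lt fun h => hwn ?_
    rw [← hQ.map_mem_timelike, ← smul_kleinLift_kleinMap hpos.ne']
    exact smul_mem_timelike hpos (kleinLift_mem_timelike.2 h)
  have hzero : ∀ e, mink e (kleinLift (kleinMap (φ (kleinLift w)))) = 0 ↔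
      mink e (φ (kleinLift w)) = 0 := fun e => by
    rw [← mink_kleinLift_kleinMap e hpos.ne', mul_eq_zero, or_iff_right hpos.ne']
  obtain ⟨j, hj, hjw, hja⟩ := hJ.exists_mink_neg hfv (P.mem_idealVerts_iff.2 ⟨hcl, hone⟩)
    ((hzero _).2 (hQ.mink_map_eq_zero _)) (by rw [P.unit]; exact one_pos)
  exact ⟨j, hj, (hzero _).1 hjw, hja⟩

theorem one_add_le_card (hQ : P.IsFacet J a Q φ f) (hJ : P.IsIrredundant J)
    (hra : P.IsRightAngled) (ha : a ∈ J) (hfv : P.FiniteVolume) (hk : 2 ≤ k) :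
    1 + (Q.a (k - 1) + Q.vInf) ≤ J.card := by
  classical
  set M := J.filter fun j => mink (P.e j) (P.e a) < 0 with hM
  have hcount : Q.vInf ≤ M.card := by
    have hex : ∀ w, ∃ j, w ∈ Q.idealVerts →
        j ∈ J ∧ mink (P.e j) (φ (kleinLift w)) = 0 ∧ mink (P.e j) (P.e a) < 0 := fun w => by
      by_cases hw : w ∈ Q.idealVerts
      · obtain ⟨j, hj⟩ := hQ.exists_mink_neg hJ hra ha hfv hw
        exact ⟨j, fun _ => hj⟩
      · exact ⟨a, fun h => absurd h hw⟩
    choose j hj using hex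
    rw [vInf, ← Set.ncard_coe_finset]
    refine Set.ncard_le_ncard_of_injOn j
      (fun w hw => Finset.mem_coe.2 (Finset.mem_filter.2 ⟨(hj w hw).1, (hj w hw).2.2⟩))
      (fun w hw w' hw' hww => ?_) (Finset.finite_toSet _)
    by_contra hne
    have hneg := mink_kleinLift_neg hw.2.le hw'.2.le hne
    have hnull : ∀ v : EuclideanSpace ℝ (Fin k), ‖v‖ = 1 →
        mink (kleinLift v) (kleinLift v) = 0 := fun v hv => by
      rw [mink_self]
      simp [hv]
    have hcaus : kleinLift w + kleinLift w' ∈ causal k := by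
      have h := convex_causal (kleinLift_mem_causal.2 hw.2.le) (kleinLift_mem_causal.2 hw'.2.le)
        (show (0 : ℝ) ≤ 1 / 2 by norm_num) (show (0 : ℝ) ≤ 1 / 2 by norm_num) (by norm_num)
      have h2 := smul_mem_causal (zero_le_two (α := ℝ)) h
      rw [smul_add, smul_smul, smul_smul] at h2
      norm_num at h2
      exact h2
    have htime : kleinLift w + kleinLift w' ∈ timelike k := by
      refine mem_timelike_of_causal hcaus ?_
      rw [mink_add_left, mink_add_right, mink_add_right, hnull w hw.2, hnull w' hw'.2,
        mink_comm (kleinLift w')]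
      linarith
    have hja : j w ≠ a := fun h => by
      have h1 := (hj w hw).2.2
      rw [h, P.unit] at h1
      linarith
    refine (hj w hw).2.2.ne (hJ.mink_eq_zero hra (hj w hw).1 ha hja
      ((hQ.map_mem_timelike _).2 htime) ?_ (hQ.mink_map_eq_zero _))
    rw [map_add, mink_add_right, (hj w hw).2.1, hww, (hj w' hw').2.1, add_zero]
  have hm : Q.m = (Finset.univ.image f).card := by
    rw [Finset.card_image_of_injective _ hQ.injective, Finset.card_univ, Fintype.card_fin]
  have himage : ∀ b ∈ Finset.univ.image f, b ∈ J ∧ mink (P.e a) (P.e b) = 0 := fun b hb =>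
    (hQ.mem_range b).1 (by simpa using hb)
  have hdisj : Disjoint (Finset.univ.image f) M := by
    rw [Finset.disjoint_left]
    intro b hb hbM
    have h := (Finset.mem_filter.1 hbM).2
    rw [mink_comm, (himage b hb).2] at h
    exact lt_irrefl _ h
  have hsub : Finset.univ.image f ∪ M ⊆ J.erase a := by
    intro b hb
    rw [Finset.mem_erase]
    rcases Finset.mem_union.1 hb with hbf | hbM
    · refine ⟨?_, (himage b hbf).1⟩
      rintro rfl
      have h := (himage b hbf).2
      rw [P.unit] at h
      exact one_ne_zero h
    · refine ⟨?_, (Finset.mem_filter.1 hbM).1⟩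
      rintro rfl
      have h := (Finset.mem_filter.1 hbM).2
      rw [P.unit] at h
      linarith
  have h1 := Finset.card_le_card hsub
  rw [Finset.card_union_of_disjoint hdisj, ← hm] at h1
  have h2 := Finset.card_erase_add_one ha
  have h3 := Q.a_le_m hk
  omega

end IsFacet

theorem IsIrredundant.exists_mem_of_idealVerts {n : ℕ} {P : HypPolyhedron n}
    {J : Finset (Fin P.m)} (hJ : P.IsIrredundant J) (hn : 2 ≤ n) (hfv : P.FiniteVolume)
    {w : EuclideanSpace ℝ (Fin n)} (hw : w ∈ P.idealVerts) :
    ∃ a ∈ J, mink (P.e a) (kleinLift w) = 0 := by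
  have hw0 : w ≠ 0 := by
    rintro rfl
    simpa using hw.2
  have hrank := Submodule.finrank_add_finrank_orthogonal (Submodule.span ℝ {w})
  rw [finrank_span_singleton hw0, finrank_euclideanSpace_fin] at hrank
  obtain ⟨⟨u, hu⟩, hu0⟩ := Module.finrank_pos_iff_exists_ne_zero.1
    (show 0 < Module.finrank ℝ (Submodule.span ℝ {w})ᗮ by omega)
  have hu0 : u ≠ 0 := fun h => hu0 (Subtype.ext h)
  rw [Submodule.mem_orthogonal_singleton_iff_inner_left] at hu
  set e : Fin (n + 1) → ℝ := kleinLift u - kleinLift 0 with he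
  have he0 : e 0 = 0 := by simp [he]
  have hes : spat e = u := by simp [he]
  obtain ⟨a, ha, haw, -⟩ := hJ.exists_mink_neg hfv hw (e := e)
    (by rw [mink_kleinLift, he0, hes, hu]; simp)
    (by rw [mink_self, he0, hes]; have := norm_pos_iff.2 hu0; simp; positivity)
  exact ⟨a, ha, haw⟩

end HypPolyhedron

theorem nuSet_two : nuSet 2 = ∅ := by
  rw [Set.eq_empty_iff_forall_notMem]
  rintro _ ⟨P, hfv, hra, hnc, -⟩
  obtain ⟨w, hw⟩ := P.exists_mem_idealVerts hfv hnc
  obtain ⟨J, hJ⟩ := P.exists_isIrredundant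
  obtain ⟨a, ha, haw⟩ := hJ.exists_mem_of_idealVerts le_rfl hfv hw
  obtain ⟨j, -, -, hja⟩ := hJ.exists_mink_neg hfv hw haw (by rw [P.unit]; exact one_pos)
  have hne : j ≠ a := by
    rintro rfl
    rw [P.unit] at hja
    linarith
  have hface : ∀ e, P.faceInHyperplane e {w} := fun e x hx hxw => by
    have h := norm_kleinMap_lt_one (mem_hyperboloid_iff.1 hx.1).1
    rw [Set.mem_singleton_iff.1 hxw, hw.2] at h
    exact absurd h (lt_irrefl _)
  refine hja.ne (hra j a hne ⟨{w}, ⟨hw.1, Set.singleton_nonempty w, ?_⟩, hface _, hface _⟩)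
  rw [sdim, vectorSpan_singleton, finrank_bot]

theorem nu_two : nu 2 = 0 := by
  rw [nu, nuSet_two, Nat.sInf_empty]

/-- For `n ≥ 3`, every finite-volume non-compact right-angled convex hyperbolic
`n`-polyhedron has at least `1 + ν_{n-1}` facets. -/
theorem facets_lower_bound (n : ℕ) (hn : 3 ≤ n) (P : HypPolyhedron n)
    (hfv : P.FiniteVolume) (hra : P.IsRightAngled) (hnc : ¬ P.IsCompactPoly) :
    1 + nu (n - 1) ≤ P.a (n - 1) := by
  obtain ⟨k, rfl⟩ : ∃ k, n = k + 1 := ⟨n - 1, by omega⟩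
  obtain ⟨w, hw⟩ := P.exists_mem_idealVerts hfv hnc
  obtain ⟨J, hJ⟩ := P.exists_isIrredundant
  obtain ⟨a, ha, haw⟩ := hJ.exists_mem_of_idealVerts (by omega) hfv hw
  refine le_trans ?_ (hJ.card_le_a (by omega))
  rw [Nat.add_sub_cancel]
  rcases (show 2 ≤ k by omega).eq_or_lt with rfl | hk
  · rw [nu_two]
    exact Finset.card_pos.2 ⟨a, ha⟩
  · obtain ⟨Q, φ, f, hQ⟩ := hJ.exists_isFacet ha
    have hmem : Q.a (k - 1) + Q.vInf ∈ nuSet k := ⟨Q, hQ.finiteVolume hJ hra ha hfv,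
      hQ.isRightAngled hJ hra hk, hQ.not_isCompactPoly hJ hra ha hw haw, rfl⟩
    exact (Nat.add_le_add_left (Nat.sInf_le hmem) 1).trans
      (hQ.one_add_le_card hJ hra ha hfv hk.le)
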